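/- arXiv:0708.0480 — 5 statements merged into one kernel-verified Lean document; each statement's English description precedes it below -/
import Mathlib

section
/- Let A be a commutative Noetherian ring and r > 0 an integer. Assume that for every n ≥ 0, every finitely generated projective module of rank r over the polynomial ring A[X_1,…,X_n] is extended from A. Then every finitely generated projective module of rank r over any discrete Hodge A-algebra is extended from A. -/
/-!
Statement 0 (Theorem 1.1 / k1): Let `A` be a commutative Noetherian ring and `r > 0`.
If all finitely generated projective modules of rank `r` over all polynomial extensions
`A[X_1,…,X_n]` are extended from `A`, then all finitely generated projective modules of
rank `r` over any discrete Hodge `A`-algebra are extended from `A`.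
-/

universe u

open TensorProduct

/-- A finitely generated projective module `P` over an `A`-algebra `B` is *extended from `A`*
if there is a finitely generated projective `A`-module `Q` with `P ≅ B ⊗[A] Q`. -/
def IsExtendedFrom (A : Type u) (B : Type u) [CommRing A] [CommRing B] [Algebra A B]
    (P : Type u) [AddCommGroup P] [Module B P] : Prop :=
  ∃ (Q : Type u) (_ : AddCommGroup Q) (_ : Module A Q),
    Module.Finite A Q ∧ Module.Projective A Q ∧ Nonempty (P ≃ₗ[B] B ⊗[A] Q)

/-- A module `P` over a commutative ring `B` has (constant) rank `r` if its localization at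
every prime of `B` has rank `r`. -/
def HasRank (B : Type u) [CommRing B] (P : Type u) [AddCommGroup P] [Module B P]
    (r : ℕ) : Prop :=
  ∀ 𝔭 : PrimeSpectrum B,
    Module.finrank (Localization.AtPrime 𝔭.asIdeal)
      (LocalizedModule 𝔭.asIdeal.primeCompl P) = r

/-- An ideal of `A[X_0,…,X_{n-1}]` is a monomial ideal if it is generated by (nonconstant)
monomials in the variables. -/
def IsMonomialIdeal {A : Type u} [CommRing A] {n : ℕ}
    (I : Ideal (MvPolynomial (Fin n) A)) : Prop :=
  ∃ S : Set (MvPolynomial (Fin n) A),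
    (∀ p ∈ S, ∃ s : Fin n →₀ ℕ, s ≠ 0 ∧ p = MvPolynomial.monomial s 1) ∧ I = Ideal.span S

/-- `B` is a discrete Hodge `A`-algebra if `B ≅ A[X_0,…,X_n]/I` for some ideal `I`
generated by monomials. -/
def IsDiscreteHodgeAlgebra (A : Type u) (B : Type u) [CommRing A] [CommRing B]
    [Algebra A B] : Prop :=
  ∃ (n : ℕ) (I : Ideal (MvPolynomial (Fin (n + 1)) A)), IsMonomialIdeal I ∧
    Nonempty ((MvPolynomial (Fin (n + 1)) A ⧸ I) ≃ₐ[A] B)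

/-!
A finitely generated projective `B`-module `P` is extended from `A` exactly when some `A`-linear map
`Q → P` from a finitely generated projective `A`-module is a base change map. If two quotients
`B₁`, `B₂` of `B` have kernels `K₁`, `K₂` with `K₁ ∩ K₂` nil, then base change maps to `P / K₁P` and
`P / K₂P` that agree over `C = B / (K₁ + K₂)` lift to `Q → P`, and the lift is again a base change
map by Nakayama's lemma. Agreement can be arranged when `C` has an augmentation to `A`, which
identifies the two modules `Q`, and `B₂ → C` has a section, along which base change maps lift.

For a monomial ideal `I` and a variable `X`, the ideal `I + (X)` and the ideal obtained from `I` by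
putting `X = 1` in its generators satisfy these conditions, and their intersection is `I` up to
radical. In both of them `X` is either killed or free, so dealing with all variables in turn reduces
to quotients by sets of variables, which are retracts of the polynomial ring.
-/

section BaseChange

variable {A B : Type*} [CommRing A] [CommRing B] [Algebra A B]

lemma surjective_of_isBaseChange {M N : Type*} [AddCommGroup M] [AddCommGroup N] [Module A M]
    [Module A N] [Module B N] [IsScalarTower A B N] {f : M →ₗ[A] N} (hf : IsBaseChange B f)
    (hB : Function.Surjective (algebraMap A B)) : Function.Surjective f := by
  intro y
  obtain ⟨m, hm⟩ := TensorProduct.mk_surjective A M B hB (hf.equiv.symm y)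
  exact ⟨m, by rw [← one_smul B (f m), ← hf.equiv_tmul, ← TensorProduct.mk_apply, hm,
    LinearEquiv.apply_symm_apply]⟩

lemma ker_eq_smul_top_of_isBaseChange {M N : Type*} [AddCommGroup M] [AddCommGroup N] [Module A M]
    [Module A N] [Module B N] [IsScalarTower A B N] {f : M →ₗ[A] N} (hf : IsBaseChange B f)
    (hB : Function.Surjective (algebraMap A B)) :
    LinearMap.ker f = RingHom.ker (algebraMap A B) • (⊤ : Submodule A M) := by
  let e : (A ⧸ RingHom.ker (algebraMap A B)) ≃ₐ[A] B :=
    Ideal.quotientKerAlgEquivOfSurjective (f := Algebra.ofId A B) hB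
  let g := (e.toLinearEquiv.rTensor M).trans (hf.equiv.restrictScalars A)
  have hg : f = g.toLinearMap ∘ₗ TensorProduct.mk A _ M 1 := by
    ext m
    simp [g, hf.equiv_tmul]
  rw [hg, LinearEquiv.ker_comp, LinearMap.ker_tensorProductMk]

lemma exists_isBaseChange_lift_of_section {C Q M N : Type*} [CommRing C] [Algebra A C] [Algebra B C]
    [IsScalarTower A B C] {s : C →ₐ[A] B} (hs : ∀ c : C, algebraMap B C (s c) = c)
    [AddCommGroup Q] [Module A Q] [AddCommGroup M] [Module A M] [Module B M] [IsScalarTower A B M]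
    [AddCommGroup N] [Module A N] [Module B N] [Module C N] [IsScalarTower A B N]
    [IsScalarTower A C N] [IsScalarTower B C N]
    {q : M →ₗ[B] N} (hq : IsBaseChange C q) {a : Q →ₗ[A] M} (ha : IsBaseChange B a)
    {c : Q →ₗ[A] N} (hc : IsBaseChange C c) :
    ∃ a' : Q →ₗ[A] M, IsBaseChange B a' ∧ q.restrictScalars A ∘ₗ a' = c := by
  algebraize [s.toRingHom]
  have : IsScalarTower A C B := .of_algebraMap_eq fun x => (s.commutes x).symm
  let : Module C M := .restrictScalars C B M
  have : IsScalarTower C B M := .restrictScalars C B M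
  have : IsScalarTower A C M := .to₁₂₄ A C B M
  have hqa := ha.comp hq
  -- `σ` exhibits `M` as the base change of `N` along the section `s`.
  let σ : N →ₗ[C] M := hqa.lift a
  have hσ (x : Q) : σ (q (a x)) = a x := hqa.lift_eq a x
  have hσ_base : IsBaseChange B σ := hqa.of_comp (by rwa [hqa.lift_comp])
  let qC : M →ₗ[C] N :=
    { q with
      map_smul' := fun x m => by
        change q (x • m) = x • q m
        rw [← algebraMap_smul B x m, map_smul, ← algebraMap_smul C (algebraMap C B x)]
        exact congrArg (· • q m) (hs x) }
  have hqσ : qC ∘ₗ σ = LinearMap.id :=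
    hqa.algHom_ext _ _ fun x => congrArg q (hσ x)
  exact ⟨_, hc.comp hσ_base, LinearMap.ext fun x => LinearMap.congr_fun hqσ (c x)⟩

lemma nonempty_linearEquiv_of_isBaseChange (ε : B →ₐ[A] A) {M Q₁ Q₂ : Type*} [AddCommGroup M]
    [AddCommGroup Q₁] [AddCommGroup Q₂] [Module A M] [Module B M] [IsScalarTower A B M]
    [Module A Q₁] [Module A Q₂] {f₁ : Q₁ →ₗ[A] M} (h₁ : IsBaseChange B f₁)
    {f₂ : Q₂ →ₗ[A] M} (h₂ : IsBaseChange B f₂) : Nonempty (Q₁ ≃ₗ[A] Q₂) := by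
  algebraize [ε.toRingHom]
  have : IsScalarTower A B A := .of_algebraMap_eq fun a => (ε.commutes a).symm
  have hM := TensorProduct.isBaseChange B M A
  exact ⟨(TensorProduct.lid A Q₁).symm ≪≫ₗ (h₁.comp hM).equiv ≪≫ₗ (h₂.comp hM).equiv.symm ≪≫ₗ
    TensorProduct.lid A Q₂⟩

end BaseChange

section Patching

open LinearMap

lemma eq_top_of_sup_smul_top_eq_top {B P : Type*} [CommRing B] [AddCommGroup P] [Module B P]
    [Module.Finite B P] {I J : Ideal B} (hIJ : I ⊓ J ≤ nilradical B) {N : Submodule B P}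
    (hI : N ⊔ I • ⊤ = ⊤) (hJ : N ⊔ J • ⊤ = ⊤) : N = ⊤ := by
  have hmul : ⊤ ≤ N ⊔ (I * J) • ⊤ :=
    calc ⊤ = N ⊔ I • (N ⊔ J • ⊤) := by rw [hJ, hI]
      _ = N ⊔ (I • N ⊔ (I * J) • ⊤) := by rw [Submodule.smul_sup, Submodule.mul_smul]
      _ ≤ N ⊔ (I * J) • ⊤ :=
        sup_le le_sup_left (sup_le (Submodule.smul_le_right.trans le_sup_left) le_sup_right)
  exact top_le_iff.1 <| Submodule.le_of_le_smul_of_le_jacobson_bot Module.Finite.fg_top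
    ((Ideal.mul_le_inf.trans hIJ).trans Ideal.radical_le_jacobson) hmul

variable {B B₁ B₂ : Type*} [CommRing B] [CommRing B₁] [CommRing B₂] [Algebra B B₁] [Algebra B B₂]
  {P P₁ P₂ : Type*} [AddCommGroup P] [Module B P] [AddCommGroup P₁] [Module B P₁] [Module B₁ P₁]
  [IsScalarTower B B₁ P₁] [AddCommGroup P₂] [Module B P₂] [Module B₂ P₂] [IsScalarTower B B₂ P₂]
  {p₁ : P →ₗ[B] P₁} {p₂ : P →ₗ[B] P₂}

lemma range_sup_ker_smul_top_eq_top (h₁ : Function.Surjective (algebraMap B B₁))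
    (hp₁ : IsBaseChange B₁ p₁) {M : Type*} [AddCommGroup M] [Module B M]
    {u : M →ₗ[B] P} (hu : Function.Surjective (p₁ ∘ₗ u)) :
    range u ⊔ RingHom.ker (algebraMap B B₁) • ⊤ = ⊤ := by
  rw [← ker_eq_smul_top_of_isBaseChange hp₁ h₁,
    ← LinearMap.map_eq_top_iff (range_eq_top.2 (surjective_of_isBaseChange hp₁ h₁)),
    ← range_comp, range_eq_top.2 hu]

lemma surjective_of_surjective_comp_of_isBaseChange [Module.Finite B P]
    (h₁ : Function.Surjective (algebraMap B B₁)) (h₂ : Function.Surjective (algebraMap B B₂))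
    (hnil : RingHom.ker (algebraMap B B₁) ⊓ RingHom.ker (algebraMap B B₂) ≤ nilradical B)
    (hp₁ : IsBaseChange B₁ p₁) (hp₂ : IsBaseChange B₂ p₂) {M : Type*} [AddCommGroup M] [Module B M]
    {u : M →ₗ[B] P} (hu₁ : Function.Surjective (p₁ ∘ₗ u)) (hu₂ : Function.Surjective (p₂ ∘ₗ u)) :
    Function.Surjective u :=
  range_eq_top.1 <| eq_top_of_sup_smul_top_eq_top hnil
    (range_sup_ker_smul_top_eq_top h₁ hp₁ hu₁) (range_sup_ker_smul_top_eq_top h₂ hp₂ hu₂)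

variable {A Q : Type*} [CommRing A] [Algebra A B] [Algebra A B₁] [Algebra A B₂]
  [IsScalarTower A B B₁] [IsScalarTower A B B₂] [AddCommGroup Q] [Module A Q]
  [Module A P] [IsScalarTower A B P] [Module A P₁] [IsScalarTower A B P₁] [IsScalarTower A B₁ P₁]
  [Module A P₂] [IsScalarTower A B P₂] [IsScalarTower A B₂ P₂]

lemma isBaseChange_of_isBaseChange_comp [Module.Finite A Q] [Module.Finite B P]
    [Module.Projective B P]
    (h₁ : Function.Surjective (algebraMap B B₁)) (h₂ : Function.Surjective (algebraMap B B₂))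
    (hnil : RingHom.ker (algebraMap B B₁) ⊓ RingHom.ker (algebraMap B B₂) ≤ nilradical B)
    (hp₁ : IsBaseChange B₁ p₁) (hp₂ : IsBaseChange B₂ p₂) {a : Q →ₗ[A] P}
    (ha₁ : IsBaseChange B₁ (p₁.restrictScalars A ∘ₗ a))
    (ha₂ : IsBaseChange B₂ (p₂.restrictScalars A ∘ₗ a)) : IsBaseChange B a := by
  have hQ := TensorProduct.isBaseChange A Q B
  let u : B ⊗[A] Q →ₗ[B] P := hQ.lift a
  have hua : u.restrictScalars A ∘ₗ TensorProduct.mk A B Q 1 = a := hQ.lift_comp a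
  have hu₁ : IsBaseChange B₁ (p₁ ∘ₗ u) := hQ.of_comp (by rwa [← hua] at ha₁)
  have hu₂ : IsBaseChange B₂ (p₂ ∘ₗ u) := hQ.of_comp (by rwa [← hua] at ha₂)
  have hu : Function.Surjective u := surjective_of_surjective_comp_of_isBaseChange h₁ h₂ hnil
    hp₁ hp₂ (surjective_of_isBaseChange hu₁ h₁) (surjective_of_isBaseChange hu₂ h₂)
  obtain ⟨v, huv⟩ := Module.projective_lifting_property u LinearMap.id hu
  have hv : Function.Surjective v :=
    surjective_of_surjective_comp_of_isBaseChange h₁ h₂ hnil hu₁ hu₂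
      (by rw [comp_assoc, huv]; exact surjective_of_isBaseChange hp₁ h₁)
      (by rw [comp_assoc, huv]; exact surjective_of_isBaseChange hp₂ h₂)
  have hvu : Function.LeftInverse v u :=
    Function.LeftInverse.rightInverse_of_surjective (LinearMap.congr_fun huv) hv
  exact .of_equiv (.ofBijective u ⟨hvu.injective, hu⟩) (LinearMap.congr_fun hua)

variable {C : Type*} [CommRing C] [Algebra B C]
  {P₁₂ : Type*} [AddCommGroup P₁₂] [Module B P₁₂] [Module C P₁₂] [IsScalarTower B C P₁₂]

lemma exists_apply_eq_of_fiberSquare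
    (h₁ : Function.Surjective (algebraMap B B₁)) (h₂ : Function.Surjective (algebraMap B B₂))
    (hC : Function.Surjective (algebraMap B C))
    (hker : RingHom.ker (algebraMap B C) ≤
      RingHom.ker (algebraMap B B₁) ⊔ RingHom.ker (algebraMap B B₂))
    (hp₁ : IsBaseChange B₁ p₁) (hp₂ : IsBaseChange B₂ p₂)
    {q₁ : P₁ →ₗ[B] P₁₂} {q₂ : P₂ →ₗ[B] P₁₂} (hq₁ : IsBaseChange C (q₁ ∘ₗ p₁))
    (hq : q₁ ∘ₗ p₁ = q₂ ∘ₗ p₂) {x₁ : P₁} {x₂ : P₂} (hx : q₁ x₁ = q₂ x₂) :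
    ∃ z, p₁ z = x₁ ∧ p₂ z = x₂ := by
  obtain ⟨y₁, rfl⟩ := surjective_of_isBaseChange hp₁ h₁ x₁
  obtain ⟨y₂, rfl⟩ := surjective_of_isBaseChange hp₂ h₂ x₂
  have hy : y₁ - y₂ ∈ ker p₁ ⊔ ker p₂ := by
    rw [ker_eq_smul_top_of_isBaseChange hp₁ h₁, ker_eq_smul_top_of_isBaseChange hp₂ h₂,
      ← Submodule.sup_smul]
    refine Submodule.smul_mono_left hker ?_
    rw [← ker_eq_smul_top_of_isBaseChange hq₁ hC, mem_ker, map_sub, sub_eq_zero]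
    exact hx.trans (LinearMap.congr_fun hq y₂).symm
  obtain ⟨k₁, hk₁, k₂, hk₂, hk⟩ := Submodule.mem_sup.1 hy
  have hz : y₁ - k₁ = y₂ + k₂ := by rw [← eq_sub_iff_add_eq.1 hk]; abel
  refine ⟨y₁ - k₁, by rw [map_sub, mem_ker.1 hk₁, sub_zero], ?_⟩
  rw [hz, map_add, mem_ker.1 hk₂, add_zero]

lemma exists_isBaseChange_of_fiberSquare [Module.Finite A Q] [Module.Projective A Q]
    [Module.Finite B P] [Module.Projective B P] [Module A P₁₂] [IsScalarTower A B P₁₂]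
    (h₁ : Function.Surjective (algebraMap B B₁)) (h₂ : Function.Surjective (algebraMap B B₂))
    (hC : Function.Surjective (algebraMap B C))
    (hnil : RingHom.ker (algebraMap B B₁) ⊓ RingHom.ker (algebraMap B B₂) ≤ nilradical B)
    (hker : RingHom.ker (algebraMap B C) ≤
      RingHom.ker (algebraMap B B₁) ⊔ RingHom.ker (algebraMap B B₂))
    (hp₁ : IsBaseChange B₁ p₁) (hp₂ : IsBaseChange B₂ p₂)
    {q₁ : P₁ →ₗ[B] P₁₂} {q₂ : P₂ →ₗ[B] P₁₂} (hq₁ : IsBaseChange C (q₁ ∘ₗ p₁))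
    (hq : q₁ ∘ₗ p₁ = q₂ ∘ₗ p₂) {a₁ : Q →ₗ[A] P₁} (ha₁ : IsBaseChange B₁ a₁)
    {a₂ : Q →ₗ[A] P₂} (ha₂ : IsBaseChange B₂ a₂)
    (ha : q₁.restrictScalars A ∘ₗ a₁ = q₂.restrictScalars A ∘ₗ a₂) :
    ∃ a : Q →ₗ[A] P, IsBaseChange B a := by
  let p := (p₁.prod p₂).restrictScalars A
  have hrange (x : Q) : a₁.prod a₂ x ∈ range p := by
    obtain ⟨z, hz₁, hz₂⟩ := exists_apply_eq_of_fiberSquare h₁ h₂ hC hker hp₁ hp₂ hq₁ hq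
      (LinearMap.congr_fun ha x)
    exact ⟨z, Prod.ext hz₁ hz₂⟩
  obtain ⟨a, ha⟩ := Module.projective_lifting_property p.rangeRestrict
    ((a₁.prod a₂).codRestrict (range p) hrange) p.surjective_rangeRestrict
  have hpa (x : Q) : p (a x) = (a₁ x, a₂ x) := congrArg Subtype.val (LinearMap.congr_fun ha x)
  have hpa₁ : p₁.restrictScalars A ∘ₗ a = a₁ := LinearMap.ext fun x => congrArg Prod.fst (hpa x)
  have hpa₂ : p₂.restrictScalars A ∘ₗ a = a₂ := LinearMap.ext fun x => congrArg Prod.snd (hpa x)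
  exact ⟨a, isBaseChange_of_isBaseChange_comp h₁ h₂ hnil hp₁ hp₂ (hpa₁ ▸ ha₁) (hpa₂ ▸ ha₂)⟩

end Patching

section Extended

variable {A B : Type u} [CommRing A] [CommRing B] [Algebra A B]

lemma isExtendedFrom_iff_exists_isBaseChange {P : Type u} [AddCommGroup P] [Module A P]
    [Module B P] [IsScalarTower A B P] :
    IsExtendedFrom A B P ↔ ∃ (Q : Type u) (_ : AddCommGroup Q) (_ : Module A Q),
      Module.Finite A Q ∧ Module.Projective A Q ∧ ∃ a : Q →ₗ[A] P, IsBaseChange B a := by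
  constructor
  · rintro ⟨Q, _, _, hfin, hproj, ⟨e⟩⟩
    exact ⟨Q, _, _, hfin, hproj,
      (e.symm.restrictScalars A).toLinearMap ∘ₗ TensorProduct.mk A B Q 1,
      .of_equiv e.symm fun _ => rfl⟩
  · rintro ⟨Q, _, _, hfin, hproj, a, ha⟩
    exact ⟨Q, _, _, hfin, hproj, ⟨ha.equiv.symm⟩⟩

lemma HasRank.baseChange {P : Type u} [AddCommGroup P] [Module A P] [Module.Finite A P]
    [Module.Projective A P] {r : ℕ} (h : HasRank A P r) : HasRank B (B ⊗[A] P) r :=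
  fun 𝔭 => (Module.rankAtStalk_baseChange (R := A) (M := P) 𝔭).trans (h _)

/-- All finitely generated projective `B`-modules of constant rank `r` are extended from `A`:
the property that is carried from polynomial rings to their monomial quotients. -/
def ProjectivesExtended (A : Type u) [CommRing A] (r : ℕ) (B : Type u) [CommRing B]
    [Algebra A B] : Prop :=
  ∀ (P : Type u) [AddCommGroup P] [Module B P] [Module.Finite B P] [Module.Projective B P],
    HasRank B P r → IsExtendedFrom A B P

namespace ProjectivesExtended

variable {r : ℕ}

lemma exists_isBaseChange (hB : ProjectivesExtended A r B) {P : Type u} [AddCommGroup P]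
    [Module A P] [Module B P] [IsScalarTower A B P] [Module.Finite B P] [Module.Projective B P]
    (hP : HasRank B P r) : ∃ (Q : Type u) (_ : AddCommGroup Q) (_ : Module A Q),
      Module.Finite A Q ∧ Module.Projective A Q ∧ ∃ a : Q →ₗ[A] P, IsBaseChange B a :=
  isExtendedFrom_iff_exists_isBaseChange.1 (hB P hP)

lemma of_subsingleton [Subsingleton B] : ProjectivesExtended A r B := by
  intro P _ _ _ _ _
  have := Module.subsingleton B P
  have := Module.subsingleton B (B ⊗[A] PUnit.{u + 1})
  exact ⟨PUnit, _, _, inferInstance, inferInstance, ⟨0⟩⟩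

lemma of_retract {R : Type u} [CommRing R] [Algebra A R] (s : B →ₐ[A] R) (p : R →ₐ[A] B)
    (hps : p.comp s = AlgHom.id A B) (hR : ProjectivesExtended A r R) :
    ProjectivesExtended A r B := by
  intro P _ _ _ _ hP
  algebraize [s.toRingHom, p.toRingHom]
  let : Module A P := .restrictScalars A B P
  have : IsScalarTower A B P := .restrictScalars A B P
  let : Module R P := .restrictScalars R B P
  have : IsScalarTower R B P := .restrictScalars R B P
  have : IsScalarTower B R B := .of_algebraMap_eq fun b => (AlgHom.congr_fun hps b).symm
  have : IsScalarTower A R B := .of_algebraMap_eq fun a => (p.commutes a).symm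
  have : IsScalarTower B R P := .of_algebraMap_smul fun b x =>
    congrArg (· • x) (AlgHom.congr_fun hps b)
  have : IsScalarTower A R P := .to₁₂₄ A R B P
  have hRP := TensorProduct.isBaseChange B P R
  have hid : IsBaseChange B (hRP.lift (LinearMap.id : P →ₗ[B] P)) :=
    hRP.of_comp (by rw [hRP.lift_comp]; exact .ofEquiv (.refl B P))
  obtain ⟨Q, _, _, hfin, hproj, a, ha⟩ := hR.exists_isBaseChange (P := R ⊗[B] P) hP.baseChange
  exact isExtendedFrom_iff_exists_isBaseChange.2 ⟨Q, _, _, hfin, hproj, _, ha.comp hid⟩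

lemma of_surjective_of_ker_le_nilradical {B₁ : Type u} [CommRing B₁] [Algebra A B₁] [Algebra B B₁]
    [IsScalarTower A B B₁] (h₁ : Function.Surjective (algebraMap B B₁))
    (hnil : RingHom.ker (algebraMap B B₁) ≤ nilradical B) (hB₁ : ProjectivesExtended A r B₁) :
    ProjectivesExtended A r B := by
  intro P _ _ _ _ hP
  let : Module A P := .restrictScalars A B P
  have : IsScalarTower A B P := .restrictScalars A B P
  have hp := TensorProduct.isBaseChange B P B₁
  obtain ⟨Q, _, _, hfin, hproj, a, ha⟩ :=
    hB₁.exists_isBaseChange (P := B₁ ⊗[B] P) hP.baseChange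
  exact isExtendedFrom_iff_exists_isBaseChange.2 ⟨Q, _, _, hfin, hproj,
    exists_isBaseChange_of_fiberSquare h₁ h₁ h₁ (inf_le_left.trans hnil) le_sup_left
      hp hp (q₁ := LinearMap.id) (q₂ := LinearMap.id) hp rfl ha ha rfl⟩

lemma of_fiberSquare {B₁ B₂ C : Type u} [CommRing B₁] [CommRing B₂] [CommRing C]
    [Algebra A B₁] [Algebra A B₂] [Algebra A C] [Algebra B B₁] [Algebra B B₂] [Algebra B C]
    [Algebra B₁ C] [Algebra B₂ C]
    [IsScalarTower A B B₁] [IsScalarTower A B B₂] [IsScalarTower A B C]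
    [IsScalarTower A B₁ C] [IsScalarTower A B₂ C]
    [IsScalarTower B B₁ C] [IsScalarTower B B₂ C]
    (h₁ : Function.Surjective (algebraMap B B₁)) (h₂ : Function.Surjective (algebraMap B B₂))
    (hC : Function.Surjective (algebraMap B C))
    (hnil : RingHom.ker (algebraMap B B₁) ⊓ RingHom.ker (algebraMap B B₂) ≤ nilradical B)
    (hker : RingHom.ker (algebraMap B C) ≤
      RingHom.ker (algebraMap B B₁) ⊔ RingHom.ker (algebraMap B B₂))
    {s : C →ₐ[A] B₂} (hs : ∀ c : C, algebraMap B₂ C (s c) = c) (ε : C →ₐ[A] A)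
    (hB₁ : ProjectivesExtended A r B₁) (hB₂ : ProjectivesExtended A r B₂) :
    ProjectivesExtended A r B := by
  intro P _ _ _ _ hP
  let : Module A P := .restrictScalars A B P
  have : IsScalarTower A B P := .restrictScalars A B P
  have hp₁ := TensorProduct.isBaseChange B P B₁
  have hp₂ := TensorProduct.isBaseChange B P B₂
  have hp := TensorProduct.isBaseChange B P C
  have hq₁ : IsBaseChange C (hp₁.lift (TensorProduct.mk B C P 1)) :=
    hp₁.of_comp (by rwa [hp₁.lift_comp])
  have hq₂ : IsBaseChange C (hp₂.lift (TensorProduct.mk B C P 1)) :=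
    hp₂.of_comp (by rwa [hp₂.lift_comp])
  obtain ⟨Q₁, _, _, hfin, hproj, a₁, ha₁⟩ :=
    hB₁.exists_isBaseChange (P := B₁ ⊗[B] P) hP.baseChange
  obtain ⟨Q₂, _, _, -, -, a₂, ha₂⟩ := hB₂.exists_isBaseChange (P := B₂ ⊗[B] P) hP.baseChange
  obtain ⟨e⟩ := nonempty_linearEquiv_of_isBaseChange ε (ha₁.comp hq₁) (ha₂.comp hq₂)
  obtain ⟨a₂', ha₂', hcomp⟩ := exists_isBaseChange_lift_of_section hs hq₂ (ha₂.comp_equiv e a₂)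
    (ha₁.comp hq₁)
  have hcomm := (hp₁.lift_comp (TensorProduct.mk B C P 1)).trans (hp₂.lift_comp _).symm
  exact isExtendedFrom_iff_exists_isBaseChange.2 ⟨Q₁, _, _, hfin, hproj,
    exists_isBaseChange_of_fiberSquare h₁ h₂ hC hnil hker hp₁ hp₂ (hp₁.comp hq₁) hcomm ha₁ ha₂'
      hcomp.symm⟩

end ProjectivesExtended

end Extended

section Quotient

variable {A R : Type u} [CommRing A] [CommRing R] [Algebra A R] {r : ℕ} {I J K : Ideal R}

lemma ker_factor_inf_ker_factor_le_nilradical (hI : K ≤ I) (hJ : K ≤ J) (hIJ : I ⊓ J ≤ K.radical) :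
    RingHom.ker (Ideal.Quotient.factor hI) ⊓ RingHom.ker (Ideal.Quotient.factor hJ) ≤
      nilradical (R ⧸ K) := by
  rintro x ⟨hxI, hxJ⟩
  obtain ⟨x, rfl⟩ := Ideal.Quotient.mk_surjective x
  obtain ⟨n, hn⟩ :=
    hIJ ⟨Ideal.Quotient.eq_zero_iff_mem.1 hxI, Ideal.Quotient.eq_zero_iff_mem.1 hxJ⟩
  exact ⟨n, by rw [← map_pow]; exact Ideal.Quotient.eq_zero_iff_mem.2 hn⟩

namespace ProjectivesExtended

lemma quotient_of_le_radical (hI : K ≤ I) (hIK : I ≤ K.radical)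
    (h : ProjectivesExtended A r (R ⧸ I)) : ProjectivesExtended A r (R ⧸ K) := by
  let : Algebra (R ⧸ K) (R ⧸ I) := (Ideal.Quotient.factor hI).toAlgebra
  have : IsScalarTower A (R ⧸ K) (R ⧸ I) := .of_algebraMap_eq fun _ => rfl
  exact of_surjective_of_ker_le_nilradical (Ideal.Quotient.factor_surjective hI)
    ((le_inf le_rfl le_rfl).trans
      (ker_factor_inf_ker_factor_le_nilradical hI hI (inf_le_left.trans hIK))) h

lemma quotient_of_inf_le_radical (hI : K ≤ I) (hJ : K ≤ J) (hIJ : I ⊓ J ≤ K.radical)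
    {φ : R →ₐ[A] R} (hφ : I ⊔ J ≤ J.comap φ) (hφ_sub : ∀ x, x - φ x ∈ I) {ε : R →ₐ[A] A}
    (hε : I ⊔ J ≤ RingHom.ker ε) (h₁ : ProjectivesExtended A r (R ⧸ I))
    (h₂ : ProjectivesExtended A r (R ⧸ J)) : ProjectivesExtended A r (R ⧸ K) := by
  let : Algebra (R ⧸ K) (R ⧸ I) := (Ideal.Quotient.factor hI).toAlgebra
  let : Algebra (R ⧸ K) (R ⧸ J) := (Ideal.Quotient.factor hJ).toAlgebra
  let : Algebra (R ⧸ I) (R ⧸ I ⊔ J) := (Ideal.Quotient.factor le_sup_left).toAlgebra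
  let : Algebra (R ⧸ J) (R ⧸ I ⊔ J) := (Ideal.Quotient.factor le_sup_right).toAlgebra
  let : Algebra (R ⧸ K) (R ⧸ I ⊔ J) := (Ideal.Quotient.factor (le_sup_of_le_left hI)).toAlgebra
  have : IsScalarTower A (R ⧸ K) (R ⧸ I) := .of_algebraMap_eq fun _ => rfl
  have : IsScalarTower A (R ⧸ K) (R ⧸ J) := .of_algebraMap_eq fun _ => rfl
  have : IsScalarTower A (R ⧸ K) (R ⧸ I ⊔ J) := .of_algebraMap_eq fun _ => rfl
  have : IsScalarTower A (R ⧸ I) (R ⧸ I ⊔ J) := .of_algebraMap_eq fun _ => rfl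
  have : IsScalarTower A (R ⧸ J) (R ⧸ I ⊔ J) := .of_algebraMap_eq fun _ => rfl
  have : IsScalarTower (R ⧸ K) (R ⧸ I) (R ⧸ I ⊔ J) :=
    .of_algebraMap_eq' (Ideal.Quotient.factor_comp hI le_sup_left).symm
  have : IsScalarTower (R ⧸ K) (R ⧸ J) (R ⧸ I ⊔ J) :=
    .of_algebraMap_eq' (Ideal.Quotient.factor_comp hJ le_sup_right).symm
  have hker : RingHom.ker (algebraMap (R ⧸ K) (R ⧸ I ⊔ J)) ≤
      RingHom.ker (algebraMap (R ⧸ K) (R ⧸ I)) ⊔ RingHom.ker (algebraMap (R ⧸ K) (R ⧸ J)) := by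
    simp only [RingHom.algebraMap_toAlgebra, Ideal.Quotient.factor_ker, Ideal.map_sup, le_rfl]
  have hsection (c : R ⧸ I ⊔ J) :
      algebraMap (R ⧸ J) (R ⧸ I ⊔ J) (Ideal.quotientMapₐ J φ hφ c) = c := by
    obtain ⟨x, rfl⟩ := Ideal.Quotient.mk_surjective c
    exact (Ideal.Quotient.eq.2 (Ideal.mem_sup_left (hφ_sub x))).symm
  exact of_fiberSquare (Ideal.Quotient.factor_surjective hI) (Ideal.Quotient.factor_surjective hJ)
    (Ideal.Quotient.factor_surjective (le_sup_of_le_left hI))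
    (ker_factor_inf_ker_factor_le_nilradical hI hJ hIJ) hker hsection
    (Ideal.Quotient.liftₐ (I ⊔ J) ε hε) h₁ h₂

end ProjectivesExtended

end Quotient

section Monomial

open MvPolynomial

variable {A σ : Type*} [CommRing A] {S : Set (σ →₀ ℕ)}

/-- The ideal generated by the monomials with exponents in `S`. -/
noncomputable def monomialIdeal (A : Type*) [CommRing A] {σ : Type*} (S : Set (σ →₀ ℕ)) :
    Ideal (MvPolynomial σ A) :=
  Ideal.span ((fun s => monomial s 1) '' S)

lemma monomialIdeal_le_iff {J : Ideal (MvPolynomial σ A)} :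
    monomialIdeal A S ≤ J ↔ ∀ s ∈ S, monomial s 1 ∈ J := by
  rw [monomialIdeal, Ideal.span_le, Set.image_subset_iff]
  rfl

lemma monomial_mem_monomialIdeal {s m : σ →₀ ℕ} (hs : s ∈ S) (hsm : s ≤ m) (a : A) :
    monomial m a ∈ monomialIdeal A S := by
  refine mem_ideal_span_monomial_image.2 fun k hk => ⟨s, hs, ?_⟩
  rwa [Finset.mem_singleton.1 (support_monomial_subset hk)]

lemma X_mem_monomialIdeal {i : σ} (hi : Finsupp.single i 1 ∈ S) :
    (X i : MvPolynomial σ A) ∈ monomialIdeal A S :=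
  monomial_mem_monomialIdeal hi le_rfl 1

/-- The endomorphism of the polynomial ring that sets the variables in `Z` to zero. -/
noncomputable def killVars (A : Type*) [CommRing A] {σ : Type*} (Z : Set σ) :
    MvPolynomial σ A →ₐ[A] MvPolynomial σ A :=
  aeval (Zᶜ.indicator X)

lemma killVars_monomial_of_ne_zero {Z : Set σ} {s : σ →₀ ℕ} {j : σ} (hj : j ∈ Z) (hs : s j ≠ 0) :
    killVars A Z (monomial s 1) = 0 := by
  rw [killVars, aeval_monomial, Finsupp.prod,
    Finset.prod_eq_zero (Finsupp.mem_support_iff.2 hs) (by simp [hj, hs]), mul_zero]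

lemma killVars_monomial_of_forall_eq_zero {Z : Set σ} {s : σ →₀ ℕ} (hs : ∀ j ∈ Z, s j = 0) :
    killVars A Z (monomial s 1) = monomial s 1 := by
  rw [killVars, aeval_monomial, monomial_eq, map_one, map_one]
  refine congrArg (1 * ·) (Finset.prod_congr rfl fun j hj => ?_)
  have hjZ : j ∈ Zᶜ := fun hjZ => Finsupp.mem_support_iff.1 hj (hs j hjZ)
  simp only [Set.indicator_of_mem hjZ]

lemma sub_killVars_mem {Z : Set σ} {J : Ideal (MvPolynomial σ A)} (hJ : ∀ j ∈ Z, X j ∈ J)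
    (x : MvPolynomial σ A) : x - killVars A Z x ∈ J := by
  have hcomp : (Ideal.Quotient.mkₐ A J).comp (killVars A Z) = Ideal.Quotient.mkₐ A J := by
    ext j
    by_cases hj : j ∈ Z
    · simpa [killVars, hj] using (Ideal.Quotient.eq_zero_iff_mem.2 (hJ j hj)).symm
    · simp [killVars, hj]
  exact Ideal.Quotient.eq.1 (AlgHom.congr_fun hcomp x).symm

lemma monomialIdeal_le_ker_aeval_zero (h0 : 0 ∉ S) :
    monomialIdeal A S ≤ RingHom.ker (aeval (0 : σ → A)) := by
  classical
  refine monomialIdeal_le_iff.2 fun s hs => ?_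
  rw [RingHom.mem_ker, aeval_zero, constantCoeff_monomial,
    if_neg (ne_of_mem_of_not_mem hs h0), map_zero]

lemma le_succ_smul_of_erase_le {s m : σ →₀ ℕ} {i : σ} (hi : 1 ≤ m i) (hs : s.erase i ≤ m) :
    s ≤ (s i + 1) • m := by
  intro j
  rw [Finsupp.smul_apply, smul_eq_mul]
  obtain rfl | hji := eq_or_ne j i
  · nlinarith
  · have : s j ≤ m j := by simpa [Finsupp.erase_ne hji] using hs j
    nlinarith

variable (A) (S) (i : σ)

lemma monomialIdeal_le_insert :
    monomialIdeal A S ≤ monomialIdeal A (insert (Finsupp.single i 1) S) :=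
  Ideal.span_mono (Set.image_mono (Set.subset_insert _ _))

lemma monomialIdeal_le_erase : monomialIdeal A S ≤ monomialIdeal A (Finsupp.erase i '' S) :=
  monomialIdeal_le_iff.2 fun s hs =>
    monomial_mem_monomialIdeal (Set.mem_image_of_mem _ hs)
      (le_add_self.trans_eq (Finsupp.single_add_erase i s)) 1

lemma monomialIdeal_insert_inf_erase_le_radical :
    monomialIdeal A (insert (Finsupp.single i 1) S) ⊓ monomialIdeal A (Finsupp.erase i '' S) ≤
      (monomialIdeal A S).radical := by
  intro x ⟨hx₀, hx₁⟩
  rw [x.as_sum]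
  refine sum_mem fun m hm => ?_
  obtain ⟨t, rfl | ht, htm⟩ := mem_ideal_span_monomial_image.1 hx₀ m hm
  · obtain ⟨_, ⟨s, hs, rfl⟩, hsm⟩ := mem_ideal_span_monomial_image.1 hx₁ m hm
    have hmi : 1 ≤ m i := by simpa using htm i
    refine ⟨s i + 1, ?_⟩
    rw [monomial_pow]
    exact monomial_mem_monomialIdeal hs (le_succ_smul_of_erase_le hmi hsm) _
  · exact Ideal.le_radical (monomial_mem_monomialIdeal ht htm _)

lemma monomialIdeal_insert_sup_erase_le_comap_killVars :
    monomialIdeal A (insert (Finsupp.single i 1) S) ⊔ monomialIdeal A (Finsupp.erase i '' S) ≤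
      (monomialIdeal A (Finsupp.erase i '' S)).comap (killVars A {i}) := by
  have hmem (s : σ →₀ ℕ) (hs : s i = 0 → s ∈ Finsupp.erase i '' S) :
      killVars A {i} (monomial s 1) ∈ monomialIdeal A (Finsupp.erase i '' S) := by
    by_cases hsi : s i = 0
    · rw [killVars_monomial_of_forall_eq_zero (by simpa using hsi)]
      exact monomial_mem_monomialIdeal (hs hsi) le_rfl 1
    · rw [killVars_monomial_of_ne_zero (Set.mem_singleton i) hsi]
      exact zero_mem _
  refine sup_le (monomialIdeal_le_iff.2 ?_) (monomialIdeal_le_iff.2 fun s hs => hmem s fun _ => hs)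
  rintro s (rfl | hs)
  · exact hmem _ (by simp)
  · exact hmem s fun hsi => ⟨s, hs, Finsupp.erase_of_notMem_support (by simpa using hsi)⟩

lemma monomialIdeal_insert_sup_erase_le_ker_aeval_zero (h0 : 0 ∉ Finsupp.erase i '' S) :
    monomialIdeal A (insert (Finsupp.single i 1) S) ⊔ monomialIdeal A (Finsupp.erase i '' S) ≤
      RingHom.ker (aeval (0 : σ → A)) := by
  refine sup_le (monomialIdeal_le_ker_aeval_zero ?_) (monomialIdeal_le_ker_aeval_zero h0)
  rintro (h | h)
  · exact Finsupp.single_ne_zero.2 one_ne_zero h.symm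
  · exact h0 ⟨0, h, Finsupp.erase_zero i⟩

end Monomial

section KilledOrFree

open MvPolynomial

variable {A σ : Type*} [CommRing A] {S : Set (σ →₀ ℕ)}

/-- Every monomial of `S` either avoids the variable `X j` or is a multiple of it because `X j`
itself belongs to `S`: thus the quotient by `monomialIdeal A S` kills `X j` or is polynomial in
`X j`. -/
def IsKilledOrFree {σ : Type*} (S : Set (σ →₀ ℕ)) (j : σ) : Prop :=
  Finsupp.single j 1 ∈ S ∨ ∀ s ∈ S, s j = 0

namespace IsKilledOrFree

variable {i j : σ}

lemma insert_single (h : j ≠ i → IsKilledOrFree S j) :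
    IsKilledOrFree (insert (Finsupp.single i 1) S) j := by
  obtain rfl | hji := eq_or_ne j i
  · exact .inl (Set.mem_insert _ _)
  · refine (h hji).imp (Set.mem_insert_of_mem _) ?_
    rintro h s (rfl | hs)
    exacts [Finsupp.single_eq_of_ne hji, h s hs]

lemma image_erase (h : j ≠ i → IsKilledOrFree S j) :
    IsKilledOrFree (Finsupp.erase i '' S) j := by
  obtain rfl | hji := eq_or_ne j i
  · exact .inr (Set.forall_mem_image.2 fun s _ => Finsupp.erase_same)
  · refine (h hji).imp (fun h => ⟨_, h, Finsupp.erase_single_ne hji.symm⟩) fun h => ?_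
    exact Set.forall_mem_image.2 fun s hs => (Finsupp.erase_ne hji).trans (h s hs)

end IsKilledOrFree

lemma monomialIdeal_le_ker_killVars (h0 : 0 ∉ S) (hS : ∀ j, IsKilledOrFree S j) :
    monomialIdeal A S ≤ RingHom.ker (killVars A {j | Finsupp.single j 1 ∈ S}) := by
  refine monomialIdeal_le_iff.2 fun s hs => ?_
  obtain ⟨j, hj⟩ := Finsupp.ne_iff.1 (ne_of_mem_of_not_mem hs h0)
  exact killVars_monomial_of_ne_zero ((hS j).resolve_right fun h => hj (h s hs)) hj

end KilledOrFree

section Induction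

open MvPolynomial

variable {A : Type u} [CommRing A] {σ : Type} {S : Set (σ →₀ ℕ)} {r : ℕ}

namespace ProjectivesExtended

lemma quotient_monomialIdeal_of_insert_of_erase (i : σ)
    (h₀ : ProjectivesExtended A r
      (MvPolynomial σ A ⧸ monomialIdeal A (insert (Finsupp.single i 1) S)))
    (h₁ : ProjectivesExtended A r (MvPolynomial σ A ⧸ monomialIdeal A (Finsupp.erase i '' S))) :
    ProjectivesExtended A r (MvPolynomial σ A ⧸ monomialIdeal A S) := by
  by_cases h0 : 0 ∈ Finsupp.erase i '' S
  · refine quotient_of_le_radical (monomialIdeal_le_insert A S i) ?_ h₀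
    have htop : monomialIdeal A (Finsupp.erase i '' S) = ⊤ :=
      (Ideal.eq_top_iff_one _).2 (monomial_mem_monomialIdeal h0 le_rfl 1)
    simpa only [htop, inf_top_eq] using monomialIdeal_insert_inf_erase_le_radical A S i
  · refine quotient_of_inf_le_radical (monomialIdeal_le_insert A S i) (monomialIdeal_le_erase A S i)
      (monomialIdeal_insert_inf_erase_le_radical A S i)
      (monomialIdeal_insert_sup_erase_le_comap_killVars A S i)
      (sub_killVars_mem ?_) (monomialIdeal_insert_sup_erase_le_ker_aeval_zero A S i h0) h₀ h₁
    rintro _ rfl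
    exact X_mem_monomialIdeal (Set.mem_insert _ _)

lemma quotient_monomialIdeal_of_forall_isKilledOrFree
    (hpoly : ProjectivesExtended A r (MvPolynomial σ A)) (hS : ∀ j, IsKilledOrFree S j) :
    ProjectivesExtended A r (MvPolynomial σ A ⧸ monomialIdeal A S) := by
  by_cases h0 : 0 ∈ S
  · have : Subsingleton (MvPolynomial σ A ⧸ monomialIdeal A S) :=
      Ideal.Quotient.subsingleton_iff.2
        ((Ideal.eq_top_iff_one _).2 (monomial_mem_monomialIdeal h0 le_rfl 1))
    exact of_subsingleton
  · refine of_retract (Ideal.Quotient.liftₐ _ _ (monomialIdeal_le_ker_killVars h0 hS))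
      (Ideal.Quotient.mkₐ A _) ?_ hpoly
    refine Ideal.Quotient.algHom_ext A (AlgHom.ext fun x => ?_)
    exact (Ideal.Quotient.eq.2 (sub_killVars_mem (fun j hj => X_mem_monomialIdeal hj) x)).symm

lemma quotient_monomialIdeal [Finite σ] (hpoly : ProjectivesExtended A r (MvPolynomial σ A))
    (S : Set (σ →₀ ℕ)) : ProjectivesExtended A r (MvPolynomial σ A ⧸ monomialIdeal A S) := by
  classical
  have := Fintype.ofFinite σ
  suffices h : ∀ (T : Finset σ) (S : Set (σ →₀ ℕ)), (∀ j ∉ T, IsKilledOrFree S j) →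
      ProjectivesExtended A r (MvPolynomial σ A ⧸ monomialIdeal A S) from
    h Finset.univ S fun j hj => absurd (Finset.mem_univ j) hj
  intro T
  induction T using Finset.induction_on with
  | empty =>
    exact fun S hS => quotient_monomialIdeal_of_forall_isKilledOrFree hpoly fun j =>
      hS j (Finset.notMem_empty j)
  | insert i T _ ih =>
    intro S hS
    have hS' (j : σ) (hj : j ∉ T) (hji : j ≠ i) : IsKilledOrFree S j :=
      hS j (by simp [hj, hji])
    exact quotient_monomialIdeal_of_insert_of_erase i
      (ih _ fun j hj => .insert_single (hS' j hj)) (ih _ fun j hj => .image_erase (hS' j hj))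

end ProjectivesExtended

end Induction

lemma IsMonomialIdeal.exists_eq_monomialIdeal {A : Type u} [CommRing A] {n : ℕ}
    {I : Ideal (MvPolynomial (Fin n) A)} (hI : IsMonomialIdeal I) :
    ∃ S : Set (Fin n →₀ ℕ), I = monomialIdeal A S := by
  obtain ⟨M, hM, rfl⟩ := hI
  refine ⟨{s | MvPolynomial.monomial s 1 ∈ M}, congrArg Ideal.span ?_⟩
  ext p
  constructor
  · intro hp
    obtain ⟨s, -, rfl⟩ := hM p hp
    exact Set.mem_image_of_mem _ hp
  · rintro ⟨s, hs, rfl⟩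
    exact hs

theorem extended_of_discreteHodge_of_extended_of_polynomial_general {A : Type u} [CommRing A]
    {r : ℕ} {σ : Type} [Finite σ] (hpoly : ProjectivesExtended A r (MvPolynomial σ A))
    (S : Set (σ →₀ ℕ)) {B : Type u} [CommRing B] [Algebra A B]
    (e : (MvPolynomial σ A ⧸ monomialIdeal A S) ≃ₐ[A] B) : ProjectivesExtended A r B :=
  .of_retract e.symm.toAlgHom e.toAlgHom (by ext; simp) (.quotient_monomialIdeal hpoly S)

theorem extended_of_discreteHodge_of_extended_of_polynomial
    (A : Type u) [CommRing A] [IsNoetherianRing A] (r : ℕ) (hr : 0 < r)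
    (hpoly : ∀ (n : ℕ) (P : Type u) (_ : AddCommGroup P)
      (_ : Module (MvPolynomial (Fin n) A) P),
      Module.Finite (MvPolynomial (Fin n) A) P →
      Module.Projective (MvPolynomial (Fin n) A) P →
      HasRank (MvPolynomial (Fin n) A) P r →
      IsExtendedFrom A (MvPolynomial (Fin n) A) P)
    (B : Type u) [CommRing B] [Algebra A B] (hB : IsDiscreteHodgeAlgebra A B)
    (P : Type u) [AddCommGroup P] [Module B P]
    [Module.Finite B P] [Module.Projective B P] (hrank : HasRank B P r) :
    IsExtendedFrom A B P := by
  obtain ⟨n, I, hI, ⟨e⟩⟩ := hB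
  obtain ⟨S, rfl⟩ := hI.exists_eq_monomialIdeal
  exact extended_of_discreteHodge_of_extended_of_polynomial_general
    (fun P _ _ hfin hproj => hpoly (n + 1) P _ _ hfin hproj) S e P hrank
end

section
/- Let A, A_1, A_2, A_0 be commutative rings forming a cartesian (pullback) square with maps f_1 : A → A_1, f_2 : A → A_2, j_1 : A_1 → A_0, j_2 : A_2 → A_0, where j_2 is surjective. Let P be a finitely generated projective A-module and set P_i = P ⊗_A A_i for i = 0, 1, 2. If the natural base-change map Aut_{A_2}(P_2) → Aut_{A_0}(P_0) is surjective, then the natural base-change map Aut_A(P) → Aut_{A_1}(P_1) is surjective. -/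
/-! Statement 4 (Wiemers, Proposition 2.1(i)): in a cartesian square of commutative rings
`A → A₁`, `A → A₂`, `j₁ : A₁ → A₀`, `j₂ : A₂ → A₀` with `j₂` surjective, if the base-change
map `Aut_{A₂}(P₂) → Aut_{A₀}(P₀)` is surjective for a f.g. projective `A`-module `P`,
then `Aut_A(P) → Aut_{A₁}(P₁)` is surjective.  Here an automorphism `τ` of a base change
is "the base change of `σ`" precisely when it is compatible with the natural map on tensors. -/

universe u

open TensorProduct

/-! Tensoring with the flat module `P` preserves the pullback `A = A₁ ×_{A₀} A₂`, because it
preserves exactness of `0 → A → A₁ × A₂ → A₀`; so `P = P₁ ×_{P₀} P₂`. Given an automorphism `τ₁`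
of `P₁`, lift the automorphism it induces on `P₀` to some `σ₂` on `P₂`. Then `τ₁` and `σ₂` agree
on `P₀`, and `(τ₁, σ₂)` restricts to the required automorphism of `P`. -/

/-- The square of linear maps with `f₁`, `f₂` leaving `M` and `g₁`, `g₂` arriving at `M₀` is
cartesian. This is the elementwise form of the universal property `M = M₁ ×_{M₀} M₂`, used for
rings (as modules over the corner `A`) and for their base changes. -/
structure IsCartesianSquare {R M M₁ M₂ M₀ : Type*} [Semiring R]
    [AddCommMonoid M] [AddCommMonoid M₁] [AddCommMonoid M₂] [AddCommMonoid M₀]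
    [Module R M] [Module R M₁] [Module R M₂] [Module R M₀]
    (f₁ : M →ₗ[R] M₁) (f₂ : M →ₗ[R] M₂) (g₁ : M₁ →ₗ[R] M₀) (g₂ : M₂ →ₗ[R] M₀) : Prop where
  comm (m : M) : g₁ (f₁ m) = g₂ (f₂ m)
  existsUnique (m₁ : M₁) (m₂ : M₂) (h : g₁ m₁ = g₂ m₂) : ∃! m, f₁ m = m₁ ∧ f₂ m = m₂

namespace IsCartesianSquare

section Semiring

variable {R M M₁ M₂ M₀ N N₁ N₂ N₀ : Type*} [Semiring R]
  [AddCommMonoid M] [AddCommMonoid M₁] [AddCommMonoid M₂] [AddCommMonoid M₀]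
  [Module R M] [Module R M₁] [Module R M₂] [Module R M₀]
  [AddCommMonoid N] [AddCommMonoid N₁] [AddCommMonoid N₂] [AddCommMonoid N₀]
  [Module R N] [Module R N₁] [Module R N₂] [Module R N₀]
  {f₁ : M →ₗ[R] M₁} {f₂ : M →ₗ[R] M₂} {g₁ : M₁ →ₗ[R] M₀} {g₂ : M₂ →ₗ[R] M₀}
  {f₁' : N →ₗ[R] N₁} {f₂' : N →ₗ[R] N₂} {g₁' : N₁ →ₗ[R] N₀} {g₂' : N₂ →ₗ[R] N₀}

theorem ext (h : IsCartesianSquare f₁ f₂ g₁ g₂) {m n : M} (h₁ : f₁ m = f₁ n) (h₂ : f₂ m = f₂ n) :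
    m = n :=
  (h.existsUnique _ _ (h.comm n)).unique ⟨h₁, h₂⟩ ⟨rfl, rfl⟩

theorem comp_linearEquiv (h : IsCartesianSquare f₁ f₂ g₁ g₂) (e : N ≃ₗ[R] M) :
    IsCartesianSquare (f₁ ∘ₗ e.toLinearMap) (f₂ ∘ₗ e.toLinearMap) g₁ g₂ where
  comm n := h.comm (e n)
  existsUnique m₁ m₂ hm :=
    (e.bijective.existsUnique_iff (p := fun m ↦ f₁ m = m₁ ∧ f₂ m = m₂)).1
      (h.existsUnique m₁ m₂ hm)

theorem exists_lift (h : IsCartesianSquare f₁ f₂ g₁ g₂) (u₁ : N →ₗ[R] M₁) (u₂ : N →ₗ[R] M₂)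
    (hu : ∀ n, g₁ (u₁ n) = g₂ (u₂ n)) :
    ∃ u : N →ₗ[R] M, ∀ n, f₁ (u n) = u₁ n ∧ f₂ (u n) = u₂ n := by
  choose u hu using fun n ↦ (h.existsUnique _ _ (hu n)).exists
  refine ⟨{ toFun := u, map_add' := fun m n ↦ ?_, map_smul' := fun r n ↦ ?_ }, hu⟩ <;>
    apply h.ext <;> simp [hu]

theorem exists_linearEquiv (h : IsCartesianSquare f₁ f₂ g₁ g₂)
    (h' : IsCartesianSquare f₁' f₂' g₁' g₂') (e₁ : M₁ ≃ₗ[R] N₁) (e₂ : M₂ ≃ₗ[R] N₂)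
    (e₀ : M₀ ≃ₗ[R] N₀) (he₁ : ∀ x, e₀ (g₁ x) = g₁' (e₁ x)) (he₂ : ∀ x, e₀ (g₂ x) = g₂' (e₂ x)) :
    ∃ e : M ≃ₗ[R] N, ∀ m, f₁' (e m) = e₁ (f₁ m) ∧ f₂' (e m) = e₂ (f₂ m) := by
  obtain ⟨u, hu⟩ := h'.exists_lift (e₁.toLinearMap ∘ₗ f₁) (e₂.toLinearMap ∘ₗ f₂) fun m ↦ by
    simp [← he₁, ← he₂, h.comm]
  obtain ⟨v, hv⟩ := h.exists_lift (e₁.symm.toLinearMap ∘ₗ f₁') (e₂.symm.toLinearMap ∘ₗ f₂')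
    fun n ↦ e₀.injective <| by simp [he₁, he₂, h'.comm]
  have huv : u ∘ₗ v = LinearMap.id :=
    LinearMap.ext fun n ↦ h'.ext (by simp [hu, hv]) (by simp [hu, hv])
  have hvu : v ∘ₗ u = LinearMap.id :=
    LinearMap.ext fun m ↦ h.ext (by simp [hu, hv]) (by simp [hu, hv])
  exact ⟨.ofLinearMap u v huv hvu, hu⟩

end Semiring

theorem iff_injective_and_exact {R M M₁ M₂ M₀ : Type*} [Ring R]
    [AddCommGroup M] [AddCommGroup M₁] [AddCommGroup M₂] [AddCommGroup M₀]
    [Module R M] [Module R M₁] [Module R M₂] [Module R M₀]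
    {f₁ : M →ₗ[R] M₁} {f₂ : M →ₗ[R] M₂} {g₁ : M₁ →ₗ[R] M₀} {g₂ : M₂ →ₗ[R] M₀} :
    IsCartesianSquare f₁ f₂ g₁ g₂ ↔
      Function.Injective (f₁.prod f₂) ∧ Function.Exact (f₁.prod f₂) (g₁.coprod (-g₂)) := by
  have mem_ker (m₁ : M₁) (m₂ : M₂) : g₁.coprod (-g₂) (m₁, m₂) = 0 ↔ g₁ m₁ = g₂ m₂ := by
    simp [← sub_eq_add_neg, sub_eq_zero]
  constructor
  · intro h
    refine ⟨fun m n hmn ↦ h.ext (congrArg Prod.fst hmn) (congrArg Prod.snd hmn), ?_⟩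
    rintro ⟨m₁, m₂⟩
    rw [mem_ker]
    constructor
    · intro hm
      obtain ⟨m, ⟨rfl, rfl⟩, -⟩ := h.existsUnique m₁ m₂ hm
      exact ⟨m, rfl⟩
    · rintro ⟨m, hm⟩
      obtain ⟨rfl, rfl⟩ := Prod.ext_iff.1 hm
      exact h.comm m
  · rintro ⟨hinj, hexact⟩
    refine ⟨fun m ↦ (mem_ker _ _).1 (hexact.apply_apply_eq_zero m), fun m₁ m₂ hm ↦ ?_⟩
    obtain ⟨m, hm⟩ := (hexact (m₁, m₂)).1 ((mem_ker m₁ m₂).2 hm)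
    exact ⟨m, Prod.ext_iff.1 hm, fun n hn ↦ hinj ((Prod.ext hn.1 hn.2).trans hm.symm)⟩

end IsCartesianSquare

section TensorProductOfProd

variable {R M M₁ M₂ : Type*} (P : Type*) [CommSemiring R]
  [AddCommMonoid M] [AddCommMonoid M₁] [AddCommMonoid M₂] [AddCommMonoid P]
  [Module R M] [Module R M₁] [Module R M₂] [Module R P]

theorem prodLeft_comp_rTensor_prod (f₁ : M →ₗ[R] M₁) (f₂ : M →ₗ[R] M₂) :
    (prodLeft R R M₁ M₂ P).toLinearMap ∘ₗ (f₁.prod f₂).rTensor P =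
      (f₁.rTensor P).prod (f₂.rTensor P) :=
  TensorProduct.ext' fun _ _ ↦ rfl

theorem coprod_rTensor_comp_prodLeft (g₁ : M₁ →ₗ[R] M) (g₂ : M₂ →ₗ[R] M) :
    (g₁.rTensor P).coprod (g₂.rTensor P) ∘ₗ (prodLeft R R M₁ M₂ P).toLinearMap =
      (g₁.coprod g₂).rTensor P :=
  TensorProduct.ext' fun ⟨_, _⟩ _ ↦ by simp [add_tmul]

end TensorProductOfProd

theorem IsCartesianSquare.rTensor {R M M₁ M₂ M₀ : Type*} [CommRing R]
    [AddCommGroup M] [AddCommGroup M₁] [AddCommGroup M₂] [AddCommGroup M₀]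
    [Module R M] [Module R M₁] [Module R M₂] [Module R M₀]
    {f₁ : M →ₗ[R] M₁} {f₂ : M →ₗ[R] M₂} {g₁ : M₁ →ₗ[R] M₀} {g₂ : M₂ →ₗ[R] M₀}
    (h : IsCartesianSquare f₁ f₂ g₁ g₂)
    (P : Type*) [AddCommGroup P] [Module R P] [Module.Flat R P] :
    IsCartesianSquare (f₁.rTensor P) (f₂.rTensor P) (g₁.rTensor P) (g₂.rTensor P) := by
  obtain ⟨hinj, hexact⟩ := iff_injective_and_exact.1 h
  rw [iff_injective_and_exact, ← LinearMap.rTensor_neg]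
  constructor
  · rw [← prodLeft_comp_rTensor_prod]
    exact (prodLeft R R M₁ M₂ P).injective.comp
      (Module.Flat.rTensor_preserves_injective_linearMap _ hinj)
  · exact .of_ladder_linearEquiv_of_exact (e₁ := .refl R _) (e₂ := prodLeft R R M₁ M₂ P)
      (e₃ := .refl R _) (prodLeft_comp_rTensor_prod P f₁ f₂).symm
      (coprod_rTensor_comp_prodLeft P g₁ (-g₂)) (Module.Flat.rTensor_exact P hexact)

section Algebra

variable {A B C : Type*} [CommSemiring A] [CommSemiring B] [CommSemiring C]
  [Algebra A B] [Algebra A C] [Algebra B C] [IsScalarTower A B C]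
  {P Q : Type*} [AddCommMonoid P] [Module A P] [AddCommMonoid Q] [Module A Q]

theorem cancelBaseChange_one_tmul (x : B ⊗[A] P) :
    AlgebraTensorModule.cancelBaseChange A B C C P (1 ⊗ₜ[B] x) =
      (IsScalarTower.toAlgHom A B C).toLinearMap.rTensor P x := by
  induction x with
  | zero => simp
  | add x y hx hy => rw [tmul_add, map_add, map_add, hx, hy]
  | tmul b p => simp [Algebra.smul_def]

variable (C) in
/-- The base change of an isomorphism `B ⊗[A] P ≃ B ⊗[A] Q` along `B → C`, with `C ⊗[B] B ⊗[A] P`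
identified with `C ⊗[A] P`. -/
noncomputable def towerBaseChange (τ : B ⊗[A] P ≃ₗ[B] B ⊗[A] Q) : C ⊗[A] P ≃ₗ[C] C ⊗[A] Q :=
  (AlgebraTensorModule.cancelBaseChange A B C C P).symm ≪≫ₗ τ.baseChange B C _ _ ≪≫ₗ
    AlgebraTensorModule.cancelBaseChange A B C C Q

theorem towerBaseChange_rTensor_apply (τ : B ⊗[A] P ≃ₗ[B] B ⊗[A] Q) (x : B ⊗[A] P) :
    towerBaseChange C τ ((IsScalarTower.toAlgHom A B C).toLinearMap.rTensor P x) =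
      (IsScalarTower.toAlgHom A B C).toLinearMap.rTensor Q (τ x) := by
  simp [towerBaseChange, ← cancelBaseChange_one_tmul]

end Algebra

section CartesianSquareOfRings

variable {A A₁ A₂ A₀ : Type*} [CommRing A] [CommRing A₁] [CommRing A₂] [CommRing A₀]
  [Algebra A A₁] [Algebra A A₂] [Algebra A A₀] [Algebra A₁ A₀] [Algebra A₂ A₀]
  [IsScalarTower A A₁ A₀] [IsScalarTower A A₂ A₀]

theorem isCartesianSquare_mk_one
    (hcart : ∀ (a₁ : A₁) (a₂ : A₂), algebraMap A₁ A₀ a₁ = algebraMap A₂ A₀ a₂ →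
      ∃! a : A, algebraMap A A₁ a = a₁ ∧ algebraMap A A₂ a = a₂)
    (P : Type*) [AddCommGroup P] [Module A P] [Module.Flat A P] :
    IsCartesianSquare (TensorProduct.mk A A₁ P 1) (TensorProduct.mk A A₂ P 1)
      ((IsScalarTower.toAlgHom A A₁ A₀).toLinearMap.rTensor P)
      ((IsScalarTower.toAlgHom A A₂ A₀).toLinearMap.rTensor P) := by
  have hA : IsCartesianSquare (Algebra.linearMap A A₁) (Algebra.linearMap A A₂)
      (IsScalarTower.toAlgHom A A₁ A₀).toLinearMap
      (IsScalarTower.toAlgHom A A₂ A₀).toLinearMap :=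
    ⟨fun a ↦ by simp, hcart⟩
  convert (hA.rTensor P).comp_linearEquiv (TensorProduct.lid A P).symm <;> ext p <;> simp

theorem aut_surjective_of_cartesian_square_general
    (hcart : ∀ (a₁ : A₁) (a₂ : A₂), algebraMap A₁ A₀ a₁ = algebraMap A₂ A₀ a₂ →
      ∃! a : A, algebraMap A A₁ a = a₁ ∧ algebraMap A A₂ a = a₂)
    {P Q : Type*} [AddCommGroup P] [Module A P] [Module.Flat A P]
    [AddCommGroup Q] [Module A Q] [Module.Flat A Q]
    (hAut : ∀ τ : (A₀ ⊗[A] P) ≃ₗ[A₀] (A₀ ⊗[A] Q),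
      ∃ σ : (A₂ ⊗[A] P) ≃ₗ[A₂] (A₂ ⊗[A] Q),
        ∀ x : A₂ ⊗[A] P,
          τ (LinearMap.rTensor P (IsScalarTower.toAlgHom A A₂ A₀).toLinearMap x) =
            LinearMap.rTensor Q (IsScalarTower.toAlgHom A A₂ A₀).toLinearMap (σ x))
    (τ₁ : (A₁ ⊗[A] P) ≃ₗ[A₁] (A₁ ⊗[A] Q)) :
    ∃ σ : P ≃ₗ[A] Q, ∀ p : P, τ₁ ((1 : A₁) ⊗ₜ[A] p) = (1 : A₁) ⊗ₜ[A] (σ p) := by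
  obtain ⟨σ₂, hσ₂⟩ := hAut (towerBaseChange A₀ τ₁)
  obtain ⟨σ, hσ⟩ := (isCartesianSquare_mk_one hcart P).exists_linearEquiv
    (isCartesianSquare_mk_one hcart Q) (τ₁.restrictScalars A) (σ₂.restrictScalars A)
    ((towerBaseChange A₀ τ₁).restrictScalars A) (towerBaseChange_rTensor_apply τ₁) hσ₂
  exact ⟨σ, fun p ↦ (hσ p).1.symm⟩

end CartesianSquareOfRings

theorem aut_surjective_of_cartesian_square
    (A A₁ A₂ A₀ : Type u) [CommRing A] [CommRing A₁] [CommRing A₂] [CommRing A₀]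
    [IsNoetherianRing A] [IsNoetherianRing A₁] [IsNoetherianRing A₂] [IsNoetherianRing A₀]
    [Algebra A A₁] [Algebra A A₂] [Algebra A A₀] [Algebra A₁ A₀] [Algebra A₂ A₀]
    [IsScalarTower A A₁ A₀] [IsScalarTower A A₂ A₀]
    (hj₂ : Function.Surjective (algebraMap A₂ A₀))
    (hcart : ∀ (a₁ : A₁) (a₂ : A₂), algebraMap A₁ A₀ a₁ = algebraMap A₂ A₀ a₂ →
      ∃! a : A, algebraMap A A₁ a = a₁ ∧ algebraMap A A₂ a = a₂)
    (P : Type u) [AddCommGroup P] [Module A P] [Module.Finite A P] [Module.Projective A P]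
    (hAut : ∀ τ : (A₀ ⊗[A] P) ≃ₗ[A₀] (A₀ ⊗[A] P),
      ∃ σ : (A₂ ⊗[A] P) ≃ₗ[A₂] (A₂ ⊗[A] P),
        ∀ x : A₂ ⊗[A] P,
          τ (LinearMap.rTensor P (IsScalarTower.toAlgHom A A₂ A₀).toLinearMap x) =
            LinearMap.rTensor P (IsScalarTower.toAlgHom A A₂ A₀).toLinearMap (σ x)) :
    ∀ τ₁ : (A₁ ⊗[A] P) ≃ₗ[A₁] (A₁ ⊗[A] P),
      ∃ σ : P ≃ₗ[A] P, ∀ p : P, τ₁ ((1 : A₁) ⊗ₜ[A] p) = (1 : A₁) ⊗ₜ[A] (σ p) :=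
  aut_surjective_of_cartesian_square_general hcart hAut
end

section
/- Let A, A_1, A_2, A_0 be commutative rings forming a cartesian (pullback) square with maps f_1 : A → A_1, f_2 : A → A_2, j_1 : A_1 → A_0, j_2 : A_2 → A_0, where both j_1 and j_2 are surjective. Let P be a finitely generated projective A-module with P_i = P ⊗_A A_i. If the natural map Um(P_2) → Um(P_0) is surjective, then the natural map Um(P) → Um(P_1) is surjective. -/
/-! Statement 7 (Wiemers, Proposition 2.1(iii)): in a cartesian square of commutative rings
with both `j₁` and `j₂` surjective, if `Um(P₂) → Um(P₀)` is surjective then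
`Um(P) → Um(P₁)` is surjective. -/

universe u

open TensorProduct

/-- An element `p` of a `B`-module `P` is unimodular if some linear form takes value `1`
on it. -/
def IsUnimodular (B : Type u) [CommRing B] {P : Type u} [AddCommGroup P] [Module B P]
    (p : P) : Prop :=
  ∃ φ : P →ₗ[B] B, φ p = 1

/-!
Since `A₂ → A₀` is surjective, so is `A → A₁`, and `A → A₂` carries `K = ker (A → A₁)`
isomorphically onto `ker (A₂ → A₀)`.

Right exactness of `- ⊗ P` applied to `K → A₂ → A₀ → 0` shows that any `y ∈ P₁` and `x ∈ P₂` with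
the same image in `P₀` come from a common `p ∈ P`. If `y` and `x` are unimodular, so is `p`: lift a
form on `P₁` taking the value `1` at `y` to a form `φ` on `P`. Then `s = 1 - φ p` lies in `K`. For a
form `ψ` on `P₂` with `ψ x = 1`, the multiple `s • ψ` takes values in `ker (A₂ → A₀) ≅ K`, hence
gives a form `θ` on `P` with `θ p = s`, and `(φ + θ) p = 1`.
-/

/-- The commutative square of rings `A → A₁ → A₀`, `A → A₂ → A₀` is cartesian: `A` is the fiber
product `A₁ ×_{A₀} A₂`. Commutativity itself is encoded by the scalar towers `A`, `Aᵢ`, `A₀`. -/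
def IsCartesianSquare_s7 (A A₁ A₂ A₀ : Type*) [CommRing A] [CommRing A₁] [CommRing A₂] [CommRing A₀]
    [Algebra A A₁] [Algebra A A₂] [Algebra A₁ A₀] [Algebra A₂ A₀] : Prop :=
  ∀ (a₁ : A₁) (a₂ : A₂), algebraMap A₁ A₀ a₁ = algebraMap A₂ A₀ a₂ →
    ∃! a : A, algebraMap A A₁ a = a₁ ∧ algebraMap A A₂ a = a₂

namespace IsCartesianSquare_s7

section

variable {A A₁ A₂ A₀ : Type*} [CommRing A] [CommRing A₁] [CommRing A₂] [CommRing A₀]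
  [Algebra A A₁] [Algebra A A₂] [Algebra A₁ A₀] [Algebra A₂ A₀]

theorem algebraMap_surjective (hcart : IsCartesianSquare_s7 A A₁ A₂ A₀)
    (hj₂ : Function.Surjective (algebraMap A₂ A₀)) :
    Function.Surjective (algebraMap A A₁) := fun a₁ ↦ by
  obtain ⟨a₂, h⟩ := hj₂ (algebraMap A₁ A₀ a₁)
  obtain ⟨a, ⟨ha, -⟩, -⟩ := hcart a₁ a₂ h.symm
  exact ⟨a, ha⟩

theorem injective_linearMap_comp_subtype_ker (hcart : IsCartesianSquare_s7 A A₁ A₂ A₀) :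
    Function.Injective
      (Algebra.linearMap A A₂ ∘ₗ (LinearMap.ker (Algebra.linearMap A A₁)).subtype) := by
  rw [injective_iff_map_eq_zero]
  rintro ⟨a, ha₁⟩ ha₂
  exact Subtype.ext <|
    (hcart 0 0 (by simp)).unique ⟨ha₁, ha₂⟩ ⟨map_zero _, map_zero _⟩

variable [Algebra A A₀] [IsScalarTower A A₁ A₀] [IsScalarTower A A₂ A₀]

theorem exact_linearMap_comp_subtype_ker (hcart : IsCartesianSquare_s7 A A₁ A₂ A₀) :
    Function.Exact (Algebra.linearMap A A₂ ∘ₗ (LinearMap.ker (Algebra.linearMap A A₁)).subtype)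
      (IsScalarTower.toAlgHom A A₂ A₀).toLinearMap := by
  intro a₂
  constructor
  · intro h
    obtain ⟨a, ⟨ha₁, ha₂⟩, -⟩ := hcart 0 a₂ (by simpa using h.symm)
    exact ⟨⟨a, ha₁⟩, ha₂⟩
  · rintro ⟨⟨a, ha⟩, rfl⟩
    have ha₁ : algebraMap A A₁ a = 0 := ha
    simp [IsScalarTower.algebraMap_apply A A₁ A₀, ha₁]

variable {P : Type*} [AddCommGroup P] [Module A P]

theorem exists_one_tmul_eq_of_rTensor_eq_zero (hcart : IsCartesianSquare_s7 A A₁ A₂ A₀)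
    (hj₂ : Function.Surjective (algebraMap A₂ A₀)) (x : A₂ ⊗[A] P)
    (hx : LinearMap.rTensor P (IsScalarTower.toAlgHom A A₂ A₀).toLinearMap x = 0) :
    ∃ p : P, (1 : A₁) ⊗ₜ[A] p = 0 ∧ (1 : A₂) ⊗ₜ[A] p = x := by
  obtain ⟨z, rfl⟩ := (rTensor_exact P hcart.exact_linearMap_comp_subtype_ker hj₂ x).1 hx
  clear hx
  induction z with
  | zero => exact ⟨0, by simp⟩
  | add z w hz hw =>
    obtain ⟨p, hp₁, hp₂⟩ := hz
    obtain ⟨q, hq₁, hq₂⟩ := hw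
    exact ⟨p + q, by simp [TensorProduct.tmul_add, hp₁, hq₁],
      by rw [TensorProduct.tmul_add, hp₂, hq₂, map_add]⟩
  | tmul a p =>
    have ha : algebraMap A A₁ a = 0 := a.2
    refine ⟨(a : A) • p, ?_, ?_⟩
    · rw [← TensorProduct.smul_tmul, ← Algebra.algebraMap_eq_smul_one, ha, TensorProduct.zero_tmul]
    · rw [← TensorProduct.smul_tmul, ← Algebra.algebraMap_eq_smul_one]
      rfl

theorem exists_one_tmul_eq (hcart : IsCartesianSquare_s7 A A₁ A₂ A₀)
    (hj₂ : Function.Surjective (algebraMap A₂ A₀)) (y : A₁ ⊗[A] P) (x : A₂ ⊗[A] P)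
    (hyx : LinearMap.rTensor P (IsScalarTower.toAlgHom A A₁ A₀).toLinearMap y =
      LinearMap.rTensor P (IsScalarTower.toAlgHom A A₂ A₀).toLinearMap x) :
    ∃ p : P, (1 : A₁) ⊗ₜ[A] p = y ∧ (1 : A₂) ⊗ₜ[A] p = x := by
  obtain ⟨q, rfl⟩ := TensorProduct.mk_surjective A P A₁ (hcart.algebraMap_surjective hj₂) y
  obtain ⟨k, hk₁, hk₂⟩ := hcart.exists_one_tmul_eq_of_rTensor_eq_zero hj₂
    (x - (1 : A₂) ⊗ₜ[A] q) (by simp [← hyx])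
  exact ⟨q + k, by simp [TensorProduct.tmul_add, hk₁], by simp [TensorProduct.tmul_add, hk₂]⟩

end

end IsCartesianSquare_s7

section

variable {A B C P : Type u} [CommRing A] [CommRing B] [CommRing C] [Algebra A B] [Algebra A C]
  [AddCommGroup P] [Module A P]

theorem isUnimodular_one_tmul_iff {p : P} :
    IsUnimodular B ((1 : B) ⊗ₜ[A] p) ↔ ∃ φ : P →ₗ[A] B, φ p = 1 :=
  ⟨fun ⟨φ, hφ⟩ ↦ ⟨φ.restrictScalars A ∘ₗ TensorProduct.mk A B P 1, hφ⟩,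
    fun ⟨φ, hφ⟩ ↦ ⟨φ.liftBaseChange B, by simp [hφ]⟩⟩

theorem IsUnimodular.one_tmul_of_algHom (f : B →ₐ[A] C) {p : P}
    (hp : IsUnimodular B ((1 : B) ⊗ₜ[A] p)) : IsUnimodular C ((1 : C) ⊗ₜ[A] p) := by
  obtain ⟨φ, hφ⟩ := isUnimodular_one_tmul_iff.1 hp
  exact isUnimodular_one_tmul_iff.2 ⟨f.toLinearMap ∘ₗ φ, by simp [hφ]⟩

end

namespace IsCartesianSquare_s7

variable {A A₁ A₂ A₀ P : Type u} [CommRing A] [CommRing A₁] [CommRing A₂] [CommRing A₀]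
  [Algebra A A₁] [Algebra A A₂] [Algebra A A₀] [Algebra A₁ A₀] [Algebra A₂ A₀]
  [IsScalarTower A A₁ A₀] [IsScalarTower A A₂ A₀] [AddCommGroup P] [Module A P]

theorem exists_linearMap_apply_eq (hcart : IsCartesianSquare_s7 A A₁ A₂ A₀) {p : P}
    (hp : IsUnimodular A₂ ((1 : A₂) ⊗ₜ[A] p)) {s : A} (hs : algebraMap A A₁ s = 0) :
    ∃ θ : P →ₗ[A] A, θ p = s := by
  obtain ⟨ψ, hψ⟩ := isUnimodular_one_tmul_iff.1 hp
  let K := LinearMap.ker (Algebra.linearMap A A₁)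
  let ι : K →ₗ[A] A₂ := Algebra.linearMap A A₂ ∘ₗ K.subtype
  have hι : Function.Injective ι := hcart.injective_linearMap_comp_subtype_ker
  have hs₀ : algebraMap A A₀ s = 0 := by rw [IsScalarTower.algebraMap_apply A A₁ A₀, hs, map_zero]
  have hsψ (q : P) : (s • ψ) q ∈ LinearMap.range ι :=
    (hcart.exact_linearMap_comp_subtype_ker _).1 <| by
      rw [LinearMap.smul_apply, map_smul, Algebra.smul_def, hs₀, zero_mul]
  let θ : P →ₗ[A] K := LinearMap.codRestrictOfInjective (s • ψ) ι hι hsψ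
  have hθ : ι (θ p) = ι ⟨s, hs⟩ := by
    simp [θ, LinearMap.codRestrictOfInjective_comp_apply, ι, hψ, Algebra.smul_def]
  exact ⟨K.subtype ∘ₗ θ, congrArg K.subtype (hι hθ)⟩

theorem isUnimodular [Module.Projective A P] (hcart : IsCartesianSquare_s7 A A₁ A₂ A₀)
    (hj₂ : Function.Surjective (algebraMap A₂ A₀)) {p : P}
    (hp₁ : IsUnimodular A₁ ((1 : A₁) ⊗ₜ[A] p)) (hp₂ : IsUnimodular A₂ ((1 : A₂) ⊗ₜ[A] p)) :
    IsUnimodular A p := by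
  obtain ⟨φ₁, hφ₁⟩ := isUnimodular_one_tmul_iff.1 hp₁
  obtain ⟨φ, rfl⟩ := Module.projective_lifting_property (Algebra.linearMap A A₁) φ₁
    (hcart.algebraMap_surjective hj₂)
  have hker : algebraMap A A₁ (1 - φ p) = 0 := by
    rw [map_sub, map_one, sub_eq_zero]
    exact hφ₁.symm
  obtain ⟨θ, hθ⟩ := hcart.exists_linearMap_apply_eq hp₂ hker
  exact ⟨φ + θ, by simp [hθ]⟩

end IsCartesianSquare_s7

theorem unimodular_lifts_of_cartesian_square_general
    {A A₁ A₂ A₀ P : Type u} [CommRing A] [CommRing A₁] [CommRing A₂] [CommRing A₀]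
    [Algebra A A₁] [Algebra A A₂] [Algebra A A₀] [Algebra A₁ A₀] [Algebra A₂ A₀]
    [IsScalarTower A A₁ A₀] [IsScalarTower A A₂ A₀] [AddCommGroup P] [Module A P]
    [Module.Projective A P] (hj₂ : Function.Surjective (algebraMap A₂ A₀))
    (hcart : IsCartesianSquare_s7 A A₁ A₂ A₀)
    (hUm : ∀ y : A₀ ⊗[A] P, IsUnimodular A₀ y →
      ∃ x : A₂ ⊗[A] P, IsUnimodular A₂ x ∧
        LinearMap.rTensor P (IsScalarTower.toAlgHom A A₂ A₀).toLinearMap x = y)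
    (y : A₁ ⊗[A] P) (hy : IsUnimodular A₁ y) :
    ∃ p : P, IsUnimodular A p ∧ (1 : A₁) ⊗ₜ[A] p = y := by
  obtain ⟨q, rfl⟩ := TensorProduct.mk_surjective A P A₁ (hcart.algebraMap_surjective hj₂) y
  have hq₀ : IsUnimodular A₀ ((1 : A₀) ⊗ₜ[A] q) :=
    hy.one_tmul_of_algHom (IsScalarTower.toAlgHom A A₁ A₀)
  obtain ⟨x, hx, hxq⟩ := hUm _ hq₀
  obtain ⟨p, hp₁, rfl⟩ := hcart.exists_one_tmul_eq hj₂ ((1 : A₁) ⊗ₜ[A] q) x (by simp [hxq])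
  exact ⟨p, hcart.isUnimodular hj₂ (hp₁ ▸ hy) hx, hp₁⟩

theorem unimodular_lifts_of_cartesian_square
    (A A₁ A₂ A₀ : Type u) [CommRing A] [CommRing A₁] [CommRing A₂] [CommRing A₀]
    [IsNoetherianRing A] [IsNoetherianRing A₁] [IsNoetherianRing A₂] [IsNoetherianRing A₀]
    [Algebra A A₁] [Algebra A A₂] [Algebra A A₀] [Algebra A₁ A₀] [Algebra A₂ A₀]
    [IsScalarTower A A₁ A₀] [IsScalarTower A A₂ A₀]
    (hj₁ : Function.Surjective (algebraMap A₁ A₀))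
    (hj₂ : Function.Surjective (algebraMap A₂ A₀))
    (hcart : ∀ (a₁ : A₁) (a₂ : A₂), algebraMap A₁ A₀ a₁ = algebraMap A₂ A₀ a₂ →
      ∃! a : A, algebraMap A A₁ a = a₁ ∧ algebraMap A A₂ a = a₂)
    (P : Type u) [AddCommGroup P] [Module A P] [Module.Finite A P] [Module.Projective A P]
    (hUm : ∀ y : A₀ ⊗[A] P, IsUnimodular A₀ y →
      ∃ x : A₂ ⊗[A] P, IsUnimodular A₂ x ∧
        LinearMap.rTensor P (IsScalarTower.toAlgHom A A₂ A₀).toLinearMap x = y) :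
    ∀ y : A₁ ⊗[A] P, IsUnimodular A₁ y →
      ∃ p : P, IsUnimodular A p ∧ (1 : A₁) ⊗ₜ[A] p = y :=
  unimodular_lifts_of_cartesian_square_general hj₂ hcart hUm
end

section
/- Let A be a commutative Noetherian ring and let J be an ideal of R = A[X_1,…,X_n] generated by square-free monomials. Then for every r ≥ 1, the natural map GL_r(R) → GL_r(R/J) is surjective. -/
/-! Statement 8 (Wiemers, Theorem 2.3): if `J ⊆ A[X_1,…,X_n]` is an ideal generated by
square-free monomials, then `GL_r(R) → GL_r(R/J)` is surjective for all `r ≥ 1`. -/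

universe u

/-- An ideal of `A[X_1,…,X_n]` generated by square-free monomials, i.e. by products of
distinct variables. -/
def IsSquarefreeMonomialIdeal {A : Type u} [CommRing A] {n : ℕ}
    (I : Ideal (MvPolynomial (Fin n) A)) : Prop :=
  ∃ S : Set (MvPolynomial (Fin n) A),
    (∀ p ∈ S, ∃ t : Finset (Fin n), t.Nonempty ∧ p = ∏ i ∈ t, MvPolynomial.X i) ∧
    I = Ideal.span S

/-!
Let `ρ_F` be the retraction of `A[X]` which kills the variables outside the finite set `F`. These
retractions commute, and the common kernel of those `ρ_F` with `∏ i ∈ F, X i ∉ J` is `J`, as one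
sees monomial by monomial. Each of them factors through the quotient by `J`, so a matrix `N`
invertible modulo `J` yields invertible matrices `N_F` over `A[X]`, with `ρ_F N_G = ρ_G N_F`. Such
a family is glued one face at a time: if `M` is invertible with `ρ_F M = N_F` for the faces `F`
treated so far, then the correction `M (ρ_G M)⁻¹ N_G` takes the value `N_G` under `ρ_G`, and its
value under `ρ_F` is still `N_F` because `ρ_F ρ_G M = ρ_G N_F = ρ_F N_G`.
-/

open MvPolynomial Matrix.GeneralLinearGroup

theorem exists_forall_map_eq_of_commuting_idempotents {G κ : Type*} [Group G] [Finite κ]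
    (e : κ → G →* G) (he : ∀ i x, e i (e i x) = e i x)
    (hcomm : ∀ i j x, e i (e j x) = e j (e i x))
    (v : κ → G) (hv : ∀ i, e i (v i) = v i) (hcompat : ∀ i j, e i (v j) = e j (v i)) :
    ∃ g, ∀ i, e i g = v i := by
  classical
  have := Fintype.ofFinite κ
  suffices h : ∀ s : Finset κ, ∃ g, ∀ i ∈ s, e i g = v i by simpa using h Finset.univ
  intro s
  induction s using Finset.induction_on with
  | empty => exact ⟨1, by simp⟩
  | insert a s _ ih =>
    obtain ⟨g, hg⟩ := ih
    refine ⟨g * (e a g)⁻¹ * v a, fun i hi => ?_⟩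
    obtain rfl | hi := Finset.mem_insert.mp hi
    · simp [he, hv]
    · calc e i (g * (e a g)⁻¹ * v a) = e i g * (e i (e a g))⁻¹ * e i (v a) := by simp
        _ = v i * (e a (v i))⁻¹ * e a (v i) := by rw [hcomm, hg i hi, hcompat]
        _ = v i := inv_mul_cancel_right _ _

theorem surjective_GL_map_mk_iInf_ker_of_commuting_idempotents {R κ m : Type*} [CommRing R]
    [Fintype m] [DecidableEq m] [Finite κ] (e : κ → R →+* R)
    (he : ∀ i, (e i).comp (e i) = e i) (hcomm : ∀ i j, (e i).comp (e j) = (e j).comp (e i)) :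
    Function.Surjective (map (n := m) (Ideal.Quotient.mk (⨅ i, RingHom.ker (e i)))) := by
  intro N
  let lift (i : κ) : R ⧸ (⨅ i, RingHom.ker (e i)) →+* R :=
    Ideal.Quotient.lift _ (e i) fun _ hx => Ideal.mem_iInf.mp hx i
  have lift_idem (i : κ) : (e i).comp (lift i) = lift i :=
    Ideal.Quotient.ringHom_ext (he i)
  have lift_comm (i j : κ) : (e i).comp (lift j) = (e j).comp (lift i) :=
    Ideal.Quotient.ringHom_ext (hcomm i j)
  obtain ⟨M, hM⟩ := exists_forall_map_eq_of_commuting_idempotents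
    (fun i => map (n := m) (e i))
    (fun i x => by rw [← map_comp_apply, ← map_comp, he])
    (fun i j x => by rw [← map_comp_apply, ← map_comp, hcomm, map_comp, map_comp_apply])
    (fun i => map (lift i) N)
    (fun i => by rw [← map_comp_apply, ← map_comp, lift_idem])
    (fun i j => by rw [← map_comp_apply, ← map_comp, lift_comm, map_comp, map_comp_apply])
  refine ⟨M, Matrix.GeneralLinearGroup.ext fun a b => ?_⟩
  obtain ⟨p, hp⟩ := Ideal.Quotient.mk_surjective (N a b)
  rw [Matrix.GeneralLinearGroup.map_apply, ← hp, Ideal.Quotient.eq, Ideal.mem_iInf]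
  intro i
  rw [RingHom.sub_mem_ker_iff]
  calc e i (M a b) = lift i (N a b) := congrArg (fun g : GL m R => g a b) (hM i)
    _ = e i p := (congrArg (lift i) hp).symm

section RestrictVars

variable {A σ : Type*} [CommSemiring A]

theorem prod_X_support_dvd_monomial (m : σ →₀ ℕ) (a : A) :
    ∏ i ∈ m.support, X i ∣ monomial m a := by
  rw [monomial_eq]
  exact Dvd.dvd.mul_left (Finset.prod_dvd_prod_of_dvd _ _ fun i hi =>
    dvd_pow_self _ (Finsupp.mem_support_iff.mp hi)) _

theorem prod_X_notMem_of_subset {J : Ideal (MvPolynomial σ A)} {F G : Finset σ} (hGF : G ⊆ F)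
    (hF : ∏ i ∈ F, X i ∉ J) : ∏ i ∈ G, X i ∉ J :=
  fun hG => hF (J.mem_of_dvd (Finset.prod_dvd_prod_of_subset _ _ _ hGF) hG)

variable [DecidableEq σ]

variable (A) in
/-- The retraction of `A[X]` which fixes the variables in `F` and kills all others: the projection
onto the coordinate ring of the face `F`, regarded as an endomorphism of `A[X]`. -/
noncomputable def restrictVars (F : Finset σ) : MvPolynomial σ A →ₐ[A] MvPolynomial σ A :=
  aeval fun i => if i ∈ F then X i else 0

@[simp]
theorem restrictVars_X (F : Finset σ) (i : σ) :
    restrictVars A F (X i) = if i ∈ F then X i else 0 :=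
  aeval_X _ i

theorem restrictVars_restrictVars (F G : Finset σ) (p : MvPolynomial σ A) :
    restrictVars A F (restrictVars A G p) = restrictVars A (F ∩ G) p := by
  suffices h : (restrictVars A F).comp (restrictVars A G) = restrictVars A (F ∩ G) from
    DFunLike.congr_fun h p
  ext1 i
  by_cases hi : i ∈ G <;> simp [hi]

theorem restrictVars_eq_self {F : Finset σ} {p : MvPolynomial σ A} (hp : p.vars ⊆ F) :
    restrictVars A F p = p :=
  aeval_ite_mem_eq_self p (s := F) (mod_cast hp)

theorem exists_forall_restrictVars_eq_self {κ : Type*} [Finite κ] (p : κ → MvPolynomial σ A) :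
    ∃ T : Finset σ, ∀ k, restrictVars A T (p k) = p k := by
  have := Fintype.ofFinite κ
  exact ⟨Finset.univ.biUnion fun k => (p k).vars, fun k =>
    restrictVars_eq_self (Finset.subset_biUnion_of_mem (fun k => (p k).vars) (Finset.mem_univ k))⟩

theorem restrictVars_prod_X_of_not_subset {F t : Finset σ} (h : ¬t ⊆ F) :
    restrictVars A F (∏ i ∈ t, X i) = 0 := by
  obtain ⟨i, hit, hiF⟩ := Finset.not_subset.mp h
  rw [map_prod]
  exact Finset.prod_eq_zero hit (by rw [restrictVars_X, if_neg hiF])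

theorem coeff_restrictVars_of_support_subset {F : Finset σ} {m : σ →₀ ℕ} (hm : m.support ⊆ F)
    (p : MvPolynomial σ A) : (restrictVars A F p).coeff m = p.coeff m := by
  induction p using MvPolynomial.induction_on' with
  | add p q hp hq => rw [map_add, coeff_add, coeff_add, hp, hq]
  | monomial k a =>
    obtain rfl | ha := eq_or_ne a 0
    · simp
    by_cases hk : k.support ⊆ F
    · rw [restrictVars_eq_self ((vars_monomial ha).trans_subset hk)]
    · have hzero : restrictVars A F (monomial k a) = 0 := by
        have := map_dvd (restrictVars A F) (prod_X_support_dvd_monomial k a)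
        rwa [restrictVars_prod_X_of_not_subset hk, zero_dvd_iff] at this
      have hkm : k ≠ m := by rintro rfl; exact hk hm
      rw [hzero, coeff_zero, coeff_monomial, if_neg hkm]

theorem mem_of_forall_restrictVars_eq_zero {J : Ideal (MvPolynomial σ A)} {p : MvPolynomial σ A}
    (h : ∀ F : Finset σ, ∏ i ∈ F, X i ∉ J → restrictVars A F p = 0) : p ∈ J := by
  rw [as_sum p]
  refine Ideal.sum_mem _ fun m _ => ?_
  by_cases hm : ∏ i ∈ m.support, X i ∈ J
  · exact J.mem_of_dvd (prod_X_support_dvd_monomial m _) hm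
  · rw [← coeff_restrictVars_of_support_subset subset_rfl, h _ hm, coeff_zero, monomial_zero]
    exact J.zero_mem

theorem span_le_ker_restrictVars {S : Set (MvPolynomial σ A)}
    (hS : S ⊆ Set.range fun t : Finset σ => ∏ i ∈ t, X i) {F : Finset σ}
    (hF : ∏ i ∈ F, X i ∉ Ideal.span S) : Ideal.span S ≤ RingHom.ker (restrictVars A F) := by
  rw [Ideal.span_le]
  intro p hp
  obtain ⟨t, rfl⟩ := hS hp
  exact restrictVars_prod_X_of_not_subset fun htF =>
    prod_X_notMem_of_subset htF hF (Ideal.subset_span hp)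

end RestrictVars

section GeneralLinearGroup

variable {A σ m : Type*} [CommRing A] [Fintype m] [DecidableEq m]

theorem surjective_GL_map_mk_iInf_ker_restrictVars [DecidableEq σ] (𝓕 : Finset (Finset σ)) :
    Function.Surjective
      (map (n := m) (Ideal.Quotient.mk (⨅ F : 𝓕, RingHom.ker (restrictVars A F.1).toRingHom))) :=
  surjective_GL_map_mk_iInf_ker_of_commuting_idempotents
    (fun F : 𝓕 => (restrictVars A F.1).toRingHom)
    (fun F => RingHom.ext fun p => by simp [restrictVars_restrictVars])
    (fun F G => RingHom.ext fun p => by simp [restrictVars_restrictVars, Finset.inter_comm])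

theorem GL_surjective_of_squarefree_monomial_ideal_general {S : Set (MvPolynomial σ A)}
    (hS : S ⊆ Set.range fun t : Finset σ => ∏ i ∈ t, X i) :
    Function.Surjective (map (n := m) (Ideal.Quotient.mk (Ideal.span S))) := by
  classical
  intro N
  choose P hP using fun a b => Ideal.Quotient.mk_surjective (N a b)
  -- As `σ` may be infinite, only the faces on the variables of the lift `P` are glued.
  obtain ⟨T, hT⟩ := exists_forall_restrictVars_eq_self fun ab : m × m => P ab.1 ab.2
  let 𝓕 : Finset (Finset σ) := {F ∈ T.powerset | ∏ i ∈ F, X i ∉ Ideal.span S}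
  have hle : Ideal.span S ≤ ⨅ F : 𝓕, RingHom.ker (restrictVars A F.1).toRingHom :=
    le_iInf fun F => span_le_ker_restrictVars hS (Finset.mem_filter.mp F.2).2
  obtain ⟨M, hM⟩ := surjective_GL_map_mk_iInf_ker_restrictVars 𝓕
    (map (Ideal.Quotient.factor hle) N)
  have hMP (a b : m) {F : Finset σ} (hF : F ∈ 𝓕) : restrictVars A F (M a b - P a b) = 0 := by
    have hab : Ideal.Quotient.mk _ (M a b) = Ideal.Quotient.factor hle (N a b) :=
      congrArg (fun g : GL m _ => g a b) hM
    rw [← hP, Ideal.Quotient.factor_mk, Ideal.Quotient.eq] at hab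
    exact Ideal.mem_iInf.mp hab ⟨F, hF⟩
  refine ⟨map (restrictVars A T).toRingHom M, Matrix.GeneralLinearGroup.ext fun a b => ?_⟩
  rw [Matrix.GeneralLinearGroup.map_apply, Matrix.GeneralLinearGroup.map_apply, ← hP,
    Ideal.Quotient.eq]
  refine mem_of_forall_restrictVars_eq_zero fun F hF => ?_
  calc restrictVars A F (restrictVars A T (M a b) - P a b)
      = restrictVars A (F ∩ T) (M a b - P a b) := by
        rw [← restrictVars_restrictVars, map_sub (restrictVars A T), hT (a, b)]
    _ = 0 := hMP a b (Finset.mem_filter.mpr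
        ⟨Finset.mem_powerset.mpr Finset.inter_subset_right,
          prod_X_notMem_of_subset Finset.inter_subset_left hF⟩)

end GeneralLinearGroup

theorem GL_surjective_of_squarefree_monomial_ideal
    (A : Type u) [CommRing A] [IsNoetherianRing A] (n : ℕ)
    (J : Ideal (MvPolynomial (Fin n) A)) (hJ : IsSquarefreeMonomialIdeal J)
    (r : ℕ) (hr : 1 ≤ r)
    (N : Matrix (Fin r) (Fin r) (MvPolynomial (Fin n) A ⧸ J)) (hN : IsUnit N) :
    ∃ M : Matrix (Fin r) (Fin r) (MvPolynomial (Fin n) A),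
      IsUnit M ∧ M.map (Ideal.Quotient.mk J) = N := by
  obtain ⟨S, hS, rfl⟩ := hJ
  obtain ⟨M, hM⟩ := GL_surjective_of_squarefree_monomial_ideal_general
    (fun p hp => (hS p hp).imp fun _ ht => ht.2.symm) hN.unit
  exact ⟨M, M.isUnit, congrArg Units.val hM⟩
end

section
/- Let A be a commutative Noetherian ring and let R = ⊕_{i≥0} R_i be a positively graded commutative Noetherian ring with R_0 = A. Let M be a finitely presented R-module. Then the set J(A, M) of all u ∈ A such that the localized module M_u is extended from A_u is an ideal of A. In particular, if M_𝔭 is extended from A_𝔭 for every prime ideal 𝔭 of A, then M is extended from A. -/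
/-! Statement 17 (Lindel, Theorem 1.3 / Quillen patching for positively graded rings):
`A` Noetherian, `R = ⊕_{i≥0} R_i` a positively graded Noetherian ring with `R₀ = A`, and
`M` a finitely presented `R`-module.  The set `J(A, M)` of all `u ∈ A` such that `M_u` is
extended from `A_u` is an ideal of `A`; in particular, if `M_𝔭` is extended from `A_𝔭` for
all primes `𝔭` of `A`, then `M` is extended from `A`.

"`M_u` is extended from `A_u`" is expressed by quantifying over all realizations of the
localizations `A_u`, `R_u = R[1/u]`, `M_u = M[1/u]` (which are unique up to isomorphism). -/

universe u

open TensorProduct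

/-- A module `M` over an `A`-algebra `B` is extended from `A` if `M ≅ B ⊗[A] N` for some
`A`-module `N`. -/
def ExtendedFromAlg (A B : Type u) [CommRing A] [CommRing B] [Algebra A B]
    (M : Type u) [AddCommGroup M] [Module B M] : Prop :=
  ∃ (N : Type u) (_ : AddCommGroup N) (_ : Module A N), Nonempty (M ≃ₗ[B] B ⊗[A] N)

/-- `M_u` is extended from `A_u`, phrased for arbitrary realizations `Aᵤ`, `Rᵤ`, `Mᵤ` of the
localizations of `A`, `R`, `M` at the powers of `u`. -/
def IsLocallyExtendedAway (A R : Type u) [CommRing A] [CommRing R] [Algebra A R]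
    (M : Type u) [AddCommGroup M] [Module R M] (u : A) : Prop :=
  ∀ (Aᵤ Rᵤ Mᵤ : Type u) [CommRing Aᵤ] [CommRing Rᵤ] [AddCommGroup Mᵤ]
    [Algebra A Aᵤ] [Algebra R Rᵤ] [Algebra A Rᵤ] [Algebra Aᵤ Rᵤ]
    [IsScalarTower A R Rᵤ] [IsScalarTower A Aᵤ Rᵤ]
    [IsLocalization.Away u Aᵤ] [IsLocalization.Away (algebraMap A R u) Rᵤ]
    [Module R Mᵤ] [Module Rᵤ Mᵤ] [IsScalarTower R Rᵤ Mᵤ]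
    (g : M →ₗ[R] Mᵤ),
    IsLocalizedModule (Submonoid.powers (algebraMap A R u)) g →
    ExtendedFromAlg Aᵤ Rᵤ Mᵤ

/-- `M_𝔭` is extended from `A_𝔭`, phrased for arbitrary realizations `Aₚ`, `Rₚ`, `Mₚ` of the
localizations of `A`, `R`, `M` at the prime `𝔭` of `A`. -/
def IsLocallyExtendedAtPrime (A R : Type u) [CommRing A] [CommRing R] [Algebra A R]
    (M : Type u) [AddCommGroup M] [Module R M] (𝔭 : PrimeSpectrum A) : Prop :=
  ∀ (Aₚ Rₚ Mₚ : Type u) [CommRing Aₚ] [CommRing Rₚ] [AddCommGroup Mₚ]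
    [Algebra A Aₚ] [Algebra R Rₚ] [Algebra A Rₚ] [Algebra Aₚ Rₚ]
    [IsScalarTower A R Rₚ] [IsScalarTower A Aₚ Rₚ]
    [IsLocalization.AtPrime Aₚ 𝔭.asIdeal]
    [IsLocalization (Algebra.algebraMapSubmonoid R 𝔭.asIdeal.primeCompl) Rₚ]
    [Module R Mₚ] [Module Rₚ Mₚ] [IsScalarTower R Rₚ Mₚ]
    (g : M →ₗ[R] Mₚ),
    IsLocalizedModule (Algebra.algebraMapSubmonoid R 𝔭.asIdeal.primeCompl) g →
    ExtendedFromAlg Aₚ Rₚ Mₚ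

/-!
A grading of `R` with `R₀ = A` is used through the path of `A`-algebra endomorphisms `r ↦ r tⁱ`
(`r` of degree `i`), which joins the retraction of `R` onto `A`, at time `t = 0`, to the identity,
at time `t = 1`. A module `M` over `R` is extended from `A` iff its pullbacks at these two times
are isomorphic. The `c : A` for which the pullback of `M` does not change up to isomorphism when
the time moves by a multiple of `c` form an ideal, because such moves can be composed.

If `M` becomes extended after inverting a multiplicative set `T` of `A`, its pullbacks at the
times `s` and `s + X` become isomorphic, by an isomorphism which may be taken to be the identity at
`X = 0`. The denominators then occur with positive powers of `X` only, so that the substitution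
`X ↦ c X` clears them for some `c ∈ T`, and `c` is in the ideal. Hence `J(A, M)` is the radical of
the ideal, and the ideal is the unit ideal if `M` is locally extended at all primes.

Modules are presented by matrices, and only surjections are transported: surjections in both
directions between finitely generated modules are isomorphisms.
-/

namespace QuillenPatching

open Polynomial

section Cokernel

variable {S S' : Type*} [CommRing S] [CommRing S']
variable {n n' n'' m m' m'' k l : Type*}

lemma matrix_map_sub (f : S →+* S') (Z Z' : Matrix n k S) :
    (Z - Z').map f = Z.map f - Z'.map f :=
  Matrix.map_sub f (map_sub f) Z Z'

lemma matrix_map_one [DecidableEq n] (f : S →+* S') : (1 : Matrix n n S).map f = 1 :=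
  Matrix.map_one f (map_zero f) (map_one f)

/-- `LeftDvd G Z` is left divisibility `Z = G * W` of matrices, i.e. the columns of `Z` vanish in
the cokernel of `G`. The built-in `∣` only makes sense for square matrices. -/
def LeftDvd [Fintype m] (G : Matrix n m S) (Z : Matrix n k S) : Prop :=
  ∃ W : Matrix m k S, Z = G * W

namespace LeftDvd

variable [Fintype m] {G : Matrix n m S} {Z Z₁ Z₂ : Matrix n k S}

lemma refl (G : Matrix n m S) : LeftDvd G G := by
  classical
  exact ⟨1, (Matrix.mul_one G).symm⟩

lemma zero (G : Matrix n m S) : LeftDvd G (0 : Matrix n k S) :=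
  ⟨0, (Matrix.mul_zero G).symm⟩

lemma add (h₁ : LeftDvd G Z₁) (h₂ : LeftDvd G Z₂) : LeftDvd G (Z₁ + Z₂) := by
  obtain ⟨W₁, rfl⟩ := h₁
  obtain ⟨W₂, rfl⟩ := h₂
  exact ⟨W₁ + W₂, (Matrix.mul_add ..).symm⟩

lemma sub (h₁ : LeftDvd G Z₁) (h₂ : LeftDvd G Z₂) : LeftDvd G (Z₁ - Z₂) := by
  obtain ⟨W₁, rfl⟩ := h₁
  obtain ⟨W₂, rfl⟩ := h₂
  exact ⟨W₁ - W₂, (Matrix.mul_sub ..).symm⟩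

lemma mul_right [Fintype k] (h : LeftDvd G Z) (W : Matrix k l S) : LeftDvd G (Z * W) := by
  obtain ⟨V, rfl⟩ := h
  exact ⟨V * W, Matrix.mul_assoc ..⟩

lemma mul_left [Fintype n] {a : Matrix n' n S} {G' : Matrix n' m' S} [Fintype m']
    (ha : LeftDvd G' (a * G)) (h : LeftDvd G Z) : LeftDvd G' (a * Z) := by
  obtain ⟨W, rfl⟩ := h
  rw [← Matrix.mul_assoc]
  exact ha.mul_right W

lemma map (h : LeftDvd G Z) (f : S →+* S') : LeftDvd (G.map f) (Z.map f) := by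
  obtain ⟨W, rfl⟩ := h
  exact ⟨W.map f, Matrix.map_mul⟩

lemma fromCols {Z' : Matrix n l S} (h : LeftDvd G Z) (h' : LeftDvd G Z') :
    LeftDvd G (Matrix.fromCols Z Z') := by
  obtain ⟨W, rfl⟩ := h
  obtain ⟨W', rfl⟩ := h'
  exact ⟨Matrix.fromCols W W', (Matrix.mul_fromCols ..).symm⟩

lemma of_fromCols {Z' : Matrix n l S} (h : LeftDvd G (Matrix.fromCols Z Z')) :
    LeftDvd G Z ∧ LeftDvd G Z' := by
  obtain ⟨W, hW⟩ := h
  rw [← Matrix.fromCols_toCols W, Matrix.mul_fromCols, Matrix.fromCols_ext_iff] at hW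
  exact ⟨⟨_, hW.1⟩, ⟨_, hW.2⟩⟩

end LeftDvd

/-- The cokernel of a matrix, i.e. the module it presents. -/
abbrev Coker [Fintype m] (G : Matrix n m S) : Type _ :=
  (n → S) ⧸ LinearMap.range G.mulVecLin

lemma leftDvd_iff_mkQ_mulVec_eq_zero [Fintype m] [Fintype k] {G : Matrix n m S}
    {Z : Matrix n k S} :
    LeftDvd G Z ↔ ∀ v, (LinearMap.range G.mulVecLin).mkQ (Z.mulVec v) = 0 := by
  classical
  simp only [Submodule.mkQ_apply, Submodule.Quotient.mk_eq_zero, LinearMap.mem_range,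
    Matrix.mulVecLin_apply]
  refine ⟨?_, fun h ↦ ?_⟩
  · rintro ⟨W, rfl⟩ v
    exact ⟨W.mulVec v, Matrix.mulVec_mulVec ..⟩
  · choose w hw using fun j ↦ h (Pi.single j 1)
    refine ⟨Matrix.of fun i j ↦ w j i, Matrix.ext_col fun j ↦ ?_⟩
    rw [← Matrix.mulVec_single_one, ← hw]
    rfl

/-- The map of cokernels induced by left multiplication by `a`. -/
def cokerMap [Fintype n] [Fintype m] [Fintype m'] {G : Matrix n m S} {G' : Matrix n' m' S}
    (a : Matrix n' n S) (h : LeftDvd G' (a * G)) : Coker G →ₗ[S] Coker G' :=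
  Submodule.mapQ _ _ a.mulVecLin <| by
    rintro _ ⟨v, rfl⟩
    have := leftDvd_iff_mkQ_mulVec_eq_zero.mp h v
    rwa [← Matrix.mulVec_mulVec, ← LinearMap.mem_ker, Submodule.ker_mkQ] at this

lemma exists_matrix_of_coker_linearMap [Fintype n] [Fintype m] [Fintype m']
    {G : Matrix n m S} {G' : Matrix n' m' S} (f : Coker G →ₗ[S] Coker G') :
    ∃ a : Matrix n' n S, ∀ v, f ((LinearMap.range G.mulVecLin).mkQ v) =
      (LinearMap.range G'.mulVecLin).mkQ (a.mulVec v) := by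
  classical
  obtain ⟨g, hg⟩ := Module.projective_lifting_property
    (LinearMap.range G'.mulVecLin).mkQ (f ∘ₗ (LinearMap.range G.mulVecLin).mkQ)
    (Submodule.mkQ_surjective _)
  refine ⟨LinearMap.toMatrix' g, fun v ↦ ?_⟩
  rw [LinearMap.toMatrix'_mulVec]
  exact (LinearMap.congr_fun hg v).symm

/-- Matrix form of a surjection `Coker G → Coker G'`: a map given by `a` together with a right
inverse `x` up to `G'`; nothing is required of `x` on the image of `G'`. -/
def CokerSurj [Fintype n] [DecidableEq n'] [Fintype m'] (G : Matrix n m S)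
    (G' : Matrix n' m' S) : Prop :=
  ∃ (a : Matrix n' n S) (x : Matrix n n' S), LeftDvd G' (a * G) ∧ LeftDvd G' (a * x - 1)

namespace CokerSurj

variable [Fintype n] [DecidableEq n'] [Fintype m']
variable {G : Matrix n m S} {G' : Matrix n' m' S} {G'' : Matrix n'' m'' S}

lemma refl [DecidableEq n] [Fintype m] (G : Matrix n m S) : CokerSurj G G :=
  ⟨1, 1, by rw [Matrix.one_mul]; exact .refl G, by rw [Matrix.one_mul, sub_self]; exact .zero G⟩

lemma trans [Fintype n'] [DecidableEq n''] [Fintype m''] (h : CokerSurj G G')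
    (h' : CokerSurj G' G'') : CokerSurj G G'' := by
  obtain ⟨a, x, haG, hax⟩ := h
  obtain ⟨b, y, hbG, hby⟩ := h'
  refine ⟨b * a, x * y, ?_, ?_⟩
  · rw [Matrix.mul_assoc]
    exact hbG.mul_left haG
  · have expand : b * a * (x * y) - 1 = b * ((a * x - 1) * y) + (b * y - 1) := by
      simp only [Matrix.sub_mul, Matrix.mul_sub, Matrix.one_mul, Matrix.mul_assoc]
      abel
    rw [expand]
    exact (hbG.mul_left (hax.mul_right y)).add hby

lemma map (h : CokerSurj G G') (f : S →+* S') : CokerSurj (G.map f) (G'.map f) := by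
  obtain ⟨a, x, haG, hax⟩ := h
  refine ⟨a.map f, x.map f, ?_, ?_⟩
  · rw [← Matrix.map_mul]
    exact haG.map f
  · rw [← Matrix.map_mul, ← matrix_map_one f, ← matrix_map_sub]
    exact hax.map f

lemma exists_surjective [Finite n'] [Fintype m] (h : CokerSurj G G') :
    ∃ f : Coker G →ₗ[S] Coker G', Function.Surjective f := by
  have := Fintype.ofFinite n'
  obtain ⟨a, x, haG, hax⟩ := h
  refine ⟨cokerMap a haG, (Submodule.mkQ_surjective _).forall.mpr fun v ↦
    ⟨(LinearMap.range G.mulVecLin).mkQ (x.mulVec v), ?_⟩⟩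
  have := leftDvd_iff_mkQ_mulVec_eq_zero.mp hax v
  rwa [Matrix.sub_mulVec, Matrix.one_mulVec, map_sub, sub_eq_zero, ← Matrix.mulVec_mulVec] at this

lemma nonempty_linearEquiv [DecidableEq n] [Fintype n'] [Fintype m] (h : CokerSurj G G')
    (h' : CokerSurj G' G) : Nonempty (Coker G ≃ₗ[S] Coker G') := by
  obtain ⟨f, hf⟩ := h.exists_surjective
  obtain ⟨g, hg⟩ := h'.exists_surjective
  have : Function.Injective (g ∘ₗ f) :=
    OrzechProperty.injective_of_surjective_endomorphism _ (hg.comp hf)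
  exact ⟨LinearEquiv.ofBijective f ⟨Function.Injective.of_comp this, hf⟩⟩

end CokerSurj

/-- Matrix form of a pair of mutually inverse maps `Coker G → Coker G'` and `Coker G' → Coker G`,
given by left multiplication by `a` and by `b`. -/
structure CokerInverse [Fintype n] [DecidableEq n] [Fintype n'] [DecidableEq n'] [Fintype m]
    [Fintype m'] (G : Matrix n m S) (G' : Matrix n' m' S) (a : Matrix n' n S)
    (b : Matrix n n' S) : Prop where
  map_left : LeftDvd G' (a * G)
  map_right : LeftDvd G (b * G')
  left_inv : LeftDvd G (b * a - 1)
  right_inv : LeftDvd G' (a * b - 1)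

namespace CokerInverse

variable [Fintype n] [DecidableEq n] [Fintype n'] [DecidableEq n'] [Fintype n''] [DecidableEq n'']
variable [Fintype m] [Fintype m'] [Fintype m'']
variable {G : Matrix n m S} {G' : Matrix n' m' S} {G'' : Matrix n'' m'' S}
variable {a : Matrix n' n S} {b : Matrix n n' S}

lemma symm (h : CokerInverse G G' a b) : CokerInverse G' G b a :=
  ⟨h.map_right, h.map_left, h.right_inv, h.left_inv⟩

lemma trans_map_left {a' : Matrix n'' n' S} {b' : Matrix n' n'' S} (h : CokerInverse G G' a b)
    (h' : CokerInverse G' G'' a' b') : LeftDvd G'' (a' * a * G) := by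
  rw [Matrix.mul_assoc]
  exact h'.map_left.mul_left h.map_left

lemma trans_right_inv {a' : Matrix n'' n' S} {b' : Matrix n' n'' S} (h : CokerInverse G G' a b)
    (h' : CokerInverse G' G'' a' b') : LeftDvd G'' (a' * a * (b * b') - 1) := by
  have expand : a' * a * (b * b') - 1 = a' * ((a * b - 1) * b') + (a' * b' - 1) := by
    simp only [Matrix.sub_mul, Matrix.mul_sub, Matrix.one_mul, Matrix.mul_assoc]
    abel
  rw [expand]
  exact (h'.map_left.mul_left (h.right_inv.mul_right b')).add h'.right_inv

lemma trans {a' : Matrix n'' n' S} {b' : Matrix n' n'' S} (h : CokerInverse G G' a b)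
    (h' : CokerInverse G' G'' a' b') : CokerInverse G G'' (a' * a) (b * b') where
  map_left := h.trans_map_left h'
  map_right := h'.symm.trans_map_left h.symm
  left_inv := h'.symm.trans_right_inv h.symm
  right_inv := h.trans_right_inv h'

lemma map (h : CokerInverse G G' a b) (f : S →+* S') :
    CokerInverse (G.map f) (G'.map f) (a.map f) (b.map f) where
  map_left := by simpa only [Matrix.map_mul] using h.map_left.map f
  map_right := by simpa only [Matrix.map_mul] using h.map_right.map f
  left_inv := by
    simpa only [matrix_map_sub, Matrix.map_mul, matrix_map_one] using h.left_inv.map f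
  right_inv := by
    simpa only [matrix_map_sub, Matrix.map_mul, matrix_map_one] using h.right_inv.map f

lemma cokerMap_injective (h : CokerInverse G G' a b) :
    Function.Injective (cokerMap a h.map_left) := by
  refine Function.LeftInverse.injective (g := cokerMap b h.map_right)
    ((Submodule.mkQ_surjective _).forall.mpr fun v ↦ ?_)
  have := leftDvd_iff_mkQ_mulVec_eq_zero.mp h.left_inv v
  rwa [Matrix.sub_mulVec, Matrix.one_mulVec, map_sub, sub_eq_zero, ← Matrix.mulVec_mulVec] at this

lemma isSMulRegular (h : CokerInverse G G' a b) {r : S} (hr : IsSMulRegular (Coker G') r) :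
    IsSMulRegular (Coker G) r :=
  hr.of_injective _ h.cokerMap_injective

end CokerInverse

lemma exists_cokerInverse [Fintype n] [DecidableEq n] [Fintype n'] [DecidableEq n'] [Fintype m]
    [Fintype m'] {G : Matrix n m S} {G' : Matrix n' m' S} (f : Coker G ≃ₗ[S] Coker G') :
    ∃ (a : Matrix n' n S) (b : Matrix n n' S), CokerInverse G G' a b := by
  obtain ⟨a, ha⟩ := exists_matrix_of_coker_linearMap f.toLinearMap
  obtain ⟨b, hb⟩ := exists_matrix_of_coker_linearMap f.symm.toLinearMap
  simp only [LinearEquiv.coe_coe] at ha hb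
  refine ⟨a, b, ?_, ?_, ?_, ?_⟩ <;> refine leftDvd_iff_mkQ_mulVec_eq_zero.mpr fun v ↦ ?_
  · rw [← Matrix.mulVec_mulVec, ← ha,
      leftDvd_iff_mkQ_mulVec_eq_zero.mp (.refl G), map_zero]
  · rw [← Matrix.mulVec_mulVec, ← hb,
      leftDvd_iff_mkQ_mulVec_eq_zero.mp (.refl G'), map_zero]
  · rw [Matrix.sub_mulVec, Matrix.one_mulVec, ← Matrix.mulVec_mulVec, map_sub, ← hb, ← ha,
      f.symm_apply_apply, sub_self]
  · rw [Matrix.sub_mulVec, Matrix.one_mulVec, ← Matrix.mulVec_mulVec, map_sub, ← ha, ← hb,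
      f.apply_symm_apply, sub_self]

lemma nonempty_linearEquiv_coker_map [Algebra S S'] [Finite n] [Fintype m] (G : Matrix n m S) :
    Nonempty (S' ⊗[S] Coker G ≃ₗ[S'] Coker (G.map (algebraMap S S'))) := by
  let G' := G.map (algebraMap S S')
  let f : (m → S) →ₗ[S] m → S' := (Algebra.linearMap S S').compLeft m
  let g : (n → S) →ₗ[S] n → S' := (Algebra.linearMap S S').compLeft n
  have hfg : g ∘ₗ G.mulVecLin = (G'.mulVecLin.restrictScalars S) ∘ₗ f := by
    ext v i
    exact RingHom.map_mulVec (algebraMap S S') G v i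
  let e : Coker G →ₗ[S] Coker G' :=
    Submodule.mapQ _ ((LinearMap.range G'.mulVecLin).restrictScalars S) g <| by
      rintro _ ⟨v, rfl⟩
      exact ⟨f v, (LinearMap.congr_fun hfg v).symm⟩
  have : IsBaseChange S' e := IsBaseChange.of_right_exact S' f g e hfg rfl
    (.finitePow m (.linearMap S S')) (.finitePow n (.linearMap S S'))
    (LinearMap.exact_map_mkQ_range _) (Submodule.mkQ_surjective _)
    (LinearMap.exact_map_mkQ_range _) (Submodule.mkQ_surjective _)
  exact ⟨this.equiv⟩

lemma exists_linearEquiv_coker (R M : Type*) [CommRing R] [AddCommGroup M] [Module R M]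
    [Module.FinitePresentation R M] :
    ∃ (n m : ℕ) (G : Matrix (Fin n) (Fin m) R), Nonempty (M ≃ₗ[R] Coker G) := by
  obtain ⟨n, K, f, hK⟩ := Module.FinitePresentation.exists_fin R M
  obtain ⟨m, s, hs⟩ := Submodule.fg_iff_exists_fin_generating_family.mp hK
  refine ⟨n, m, Matrix.of fun i j ↦ s j i, ⟨f ≪≫ₗ Submodule.quotEquivOfEq _ _ ?_⟩⟩
  rw [Matrix.range_mulVecLin, ← hs]
  rfl

end Cokernel

section Scaling

variable {B : Type*} [CommRing B]

/-- The endomorphism `p(X) ↦ p(cX)` of `B[X]`. -/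
noncomputable def scale (c : B) : B[X] →+* B[X] :=
  compRingHom (C c * X)

@[simp]
lemma scale_C (c b : B) : scale c (C b) = C b := by simp [scale]

@[simp]
lemma scale_X (c : B) : scale c X = C c * X := by simp [scale]

lemma coeff_scale (c : B) (p : B[X]) (i : ℕ) : (scale c p).coeff i = p.coeff i * c ^ i :=
  comp_C_mul_X_coeff

lemma constantCoeff_scale (c : B) (p : B[X]) :
    constantCoeff (scale c p) = constantCoeff p := by
  simp [constantCoeff_apply, coeff_scale]

lemma constantCoeff_comp_algebraMap (A B : Type*) [CommRing A] [CommRing B] [Algebra A B] :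
    (constantCoeff : B[X] →+* B).comp (algebraMap A B[X]) = algebraMap A B := by
  ext a
  simp

lemma scale_comp_algebraMap (A : Type*) [CommRing A] [Algebra A B] (c : B) :
    (scale c).comp (algebraMap A B[X]) = algebraMap A B[X] := by
  ext1 a
  exact scale_C c (algebraMap A B a)

lemma scale_scale (c d : B) (p : B[X]) : scale c (scale d p) = scale (c * d) p := by
  ext i
  simp only [coeff_scale]
  ring

lemma map_scale {B' : Type*} [CommRing B'] (φ : B →+* B') (c : B) (p : B[X]) :
    (scale c p).map φ = scale (φ c) (p.map φ) := by
  ext i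
  simp [coeff_scale]

lemma matrix_map_scale {B' n m : Type*} [CommRing B'] (φ : B →+* B') (c : B)
    (Z : Matrix n m B[X]) :
    (Z.map (scale c)).map (mapRingHom φ) = (Z.map (mapRingHom φ)).map (scale (φ c)) := by
  ext1 i j
  exact map_scale φ c (Z i j)

lemma matrix_map_constantCoeff_scale {n m : Type*} (c : B) (Z : Matrix n m B[X]) :
    (Z.map (scale c)).map constantCoeff = Z.map constantCoeff := by
  ext1 i j
  exact constantCoeff_scale c (Z i j)

lemma matrix_map_constantCoeff_map {B' n m : Type*} [CommRing B'] (φ : B →+* B')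
    (Z : Matrix n m B[X]) :
    (Z.map (mapRingHom φ)).map constantCoeff = (Z.map constantCoeff).map φ := by
  ext
  simp

lemma matrix_map_scale_scale {n m : Type*} (c d : B) (Z : Matrix n m B[X]) :
    (Z.map (scale d)).map (scale c) = Z.map (scale (c * d)) := by
  ext1 i j
  exact scale_scale c d (Z i j)

lemma X_smul_map_divX {n m : Type*} {Z : Matrix n m B[X]} (hZ : Z.map constantCoeff = 0) :
    (X : B[X]) • Z.map divX = Z := by
  ext1 i j
  have : (Z i j).coeff 0 = 0 := congrFun₂ hZ i j
  have := divX_mul_X_add (Z i j)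
  simp_all [mul_comm]

lemma LeftDvd.of_smul {S n m k : Type*} [CommRing S] [Fintype m] [Finite k] {G : Matrix n m S}
    {Z : Matrix n k S} {r : S} (hr : IsSMulRegular (Coker G) r) (h : LeftDvd G (r • Z)) :
    LeftDvd G Z := by
  have := Fintype.ofFinite k
  rw [leftDvd_iff_mkQ_mulVec_eq_zero] at h ⊢
  refine fun v ↦ hr.right_eq_zero_of_smul ?_
  rw [← map_smul, ← Matrix.smul_mulVec, h]

lemma exists_eq_mul_of_isSMulRegular_X {n m k : Type*} [Fintype m] [Finite k]
    {G : Matrix n m B[X]} {Z : Matrix n k B[X]} (hG : IsSMulRegular (Coker G) (X : B[X]))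
    (h : LeftDvd G Z) (hZ : Z.map constantCoeff = 0) :
    ∃ W : Matrix m k B[X], W.map constantCoeff = 0 ∧ Z = G * W := by
  rw [← X_smul_map_divX hZ] at h
  obtain ⟨W, hW⟩ := LeftDvd.of_smul hG h
  refine ⟨(X : B[X]) • W, ?_, ?_⟩
  · ext i j
    simp
  · rw [Matrix.mul_smul, ← hW, X_smul_map_divX hZ]

lemma isSMulRegular_X_coker_map_C {n m : Type*} [Fintype m] (E : Matrix n m B) :
    IsSMulRegular (Coker (E.map C)) (X : B[X]) := by
  refine (isSMulRegular_quotient_iff_mem_of_smul_mem ..).mpr fun v ⟨w, hw⟩ ↦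
    ⟨fun j ↦ (w j).divX, funext fun i ↦ ?_⟩
  have divX_X_mul : (X * v i).divX = v i := by
    ext
    simp [coeff_divX]
  have := congrArg divX_hom (congrFun hw i)
  simpa [Matrix.mulVec, dotProduct, divX_C_mul, divX_X_mul] using this

end Scaling

section Localization

variable {B B' : Type*} [CommRing B] [CommRing B'] [Algebra B B']
variable (T : Submonoid B) [IsLocalization T B']

attribute [local instance] Polynomial.algebra

lemma exists_scale_lift {n m : Type*} [Finite n] [Finite m] (Z : Matrix n m B'[X])
    (Z₀ : Matrix n m B) (hZ : Z.map constantCoeff = Z₀.map (algebraMap B B')) :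
    ∃ d ∈ T, ∃ Z' : Matrix n m B[X], Z'.map constantCoeff = Z₀ ∧
      Z'.map (mapRingHom (algebraMap B B')) = Z.map (scale (algebraMap B B' d)) := by
  have := isLocalization T B'
  obtain ⟨⟨_, d, hd, rfl⟩, hW⟩ := IsLocalization.exist_integer_multiples_of_finite (T.map C)
    fun ij : n × m ↦ (Z ij.1 ij.2).divX
  choose W hW using hW
  refine ⟨d, hd, Matrix.of fun i j ↦ C (Z₀ i j) + scale d (W (i, j)) * X, ?_, ?_⟩
  · ext
    simp
  · ext1 i j
    have hWij : (W (i, j)).map (algebraMap B B') = C (algebraMap B B' d) * (Z i j).divX := by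
      simpa [Algebra.smul_def] using hW (i, j)
    have hZij : (Z i j).coeff 0 = algebraMap B B' (Z₀ i j) := congrFun₂ hZ i j
    conv_rhs => rw [Matrix.map_apply, ← divX_mul_X_add (Z i j), hZij]
    simp [map_scale, hWij]
    ring

lemma exists_scale_eq_zero {n m : Type*} [Finite n] [Finite m] {Z : Matrix n m B[X]}
    (hZ₀ : Z.map constantCoeff = 0) (hZ : Z.map (mapRingHom (algebraMap B B')) = 0) :
    ∃ e ∈ T, Z.map (scale e) = 0 := by
  classical
  have := Fintype.ofFinite n
  have := Fintype.ofFinite m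
  have := isLocalization T B'
  have h_kill (i : n) (j : m) : ∃ e : T, C (e : B) * Z i j = 0 := by
    obtain ⟨⟨_, e, he, rfl⟩, h⟩ :=
      (IsLocalization.map_eq_zero_iff (T.map C) B'[X] (Z i j)).mp (congrFun₂ hZ i j)
    exact ⟨⟨e, he⟩, h⟩
  choose e he using h_kill
  refine ⟨(∏ i, ∏ j, e i j : T), SetLike.coe_mem _, ?_⟩
  ext i j (_ | k)
  · simpa [coeff_scale] using congrFun₂ hZ₀ i j
  · obtain ⟨f, hf⟩ : e i j ∣ ∏ i, ∏ j, e i j :=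
      (Finset.dvd_prod_of_mem _ (Finset.mem_univ j)).trans
        (Finset.dvd_prod_of_mem (fun i ↦ ∏ j, e i j) (Finset.mem_univ i))
    have h_coeff : (e i j : B) * (Z i j).coeff (k + 1) = 0 := by
      simpa using congrArg (coeff · (k + 1)) (he i j)
    simp only [Matrix.map_apply, coeff_scale, hf, Submonoid.coe_mul, Matrix.zero_apply, coeff_zero]
    linear_combination (f : B) * ((e i j : B) * f) ^ k * h_coeff

lemma exists_leftDvd_scale {n m k : Type*} [Finite n] [Fintype m] [Finite k]
    {G : Matrix n m B[X]} {Z : Matrix n k B[X]} {W : Matrix m k B'[X]}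
    (hZ : Z.map constantCoeff = 0) (hW : W.map constantCoeff = 0)
    (h : Z.map (mapRingHom (algebraMap B B')) = G.map (mapRingHom (algebraMap B B')) * W) :
    ∃ c ∈ T, LeftDvd (G.map (scale c)) (Z.map (scale c)) := by
  obtain ⟨d, hd, V, hV₀, hV⟩ := exists_scale_lift T W 0 (by simpa using hW)
  have h_const : (Z.map (scale d) - G.map (scale d) * V).map constantCoeff = 0 := by
    rw [matrix_map_sub, Matrix.map_mul, hV₀, Matrix.mul_zero, sub_zero,
      matrix_map_constantCoeff_scale, hZ]
  have h_map : (Z.map (scale d) - G.map (scale d) * V).map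
      (mapRingHom (algebraMap B B')) = 0 := by
    rw [matrix_map_sub, Matrix.map_mul, hV, matrix_map_scale, matrix_map_scale, h,
      Matrix.map_mul, sub_self]
  obtain ⟨e, he, h_zero⟩ := exists_scale_eq_zero T h_const h_map
  refine ⟨e * d, T.mul_mem he hd, V.map (scale e), ?_⟩
  rwa [matrix_map_sub, Matrix.map_mul, sub_eq_zero, matrix_map_scale_scale,
    matrix_map_scale_scale] at h_zero

variable {n m : Type*} [Fintype n] [DecidableEq n] [Fintype m]
variable {G₁ G₂ : Matrix n m B[X]} {g₁ g₂ : Matrix n m B'[X]} {a b : Matrix n n B'[X]}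

lemma exists_cokerSurj_scale_of_constantCoeff_eq_one
    (hg₁ : G₁.map (mapRingHom (algebraMap B B')) = g₁)
    (hg₂ : G₂.map (mapRingHom (algebraMap B B')) = g₂)
    (hG : G₁.map constantCoeff = G₂.map constantCoeff)
    (hreg : IsSMulRegular (Coker g₂) (X : B'[X]))
    (hag : LeftDvd g₂ (a * g₁)) (hab : LeftDvd g₂ (a * b - 1))
    (ha : a.map constantCoeff = 1) (hb : b.map constantCoeff = 1) :
    ∃ c ∈ T, CokerSurj (G₁.map (scale c)) (G₂.map (scale c)) := by
  classical
  obtain ⟨d, hd, V, hV₀, hV⟩ := exists_scale_lift T (Matrix.fromCols a b) (Matrix.fromCols 1 1)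
    (by simp [ha, hb, Matrix.fromCols_map])
  obtain ⟨α, β, rfl⟩ : ∃ α β, V = Matrix.fromCols α β := ⟨_, _, (Matrix.fromCols_toCols V).symm⟩
  simp only [Matrix.fromCols_map, Matrix.fromCols_ext_iff] at hV₀ hV
  have hg : g₁.map constantCoeff = g₂.map constantCoeff := by
    rw [← hg₁, ← hg₂, matrix_map_constantCoeff_map, matrix_map_constantCoeff_map, hG]
  obtain ⟨w, hw₀, hw⟩ : ∃ w : Matrix m (m ⊕ n) B'[X], w.map constantCoeff = 0 ∧
      Matrix.fromCols (a * g₁ - g₂) (a * b - 1) = g₂ * w := by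
    refine exists_eq_mul_of_isSMulRegular_X hreg ((hag.sub (.refl g₂)).fromCols hab) ?_
    simp [Matrix.fromCols_map, matrix_map_sub, Matrix.map_mul, ha, hb, hg]
  obtain ⟨e, he, h_dvd⟩ := exists_leftDvd_scale T (G := G₂.map (scale d))
    (Z := Matrix.fromCols (α * G₁.map (scale d) - G₂.map (scale d)) (α * β - 1))
    (W := w.map (scale (algebraMap B B' d)))
    (by
      simp only [Matrix.fromCols_map, matrix_map_sub, Matrix.map_mul, hV₀, hG, matrix_map_one,
        matrix_map_constantCoeff_scale, Matrix.one_mul, sub_self, Matrix.fromCols_zero])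
    (by rw [matrix_map_constantCoeff_scale, hw₀])
    (by
      rw [matrix_map_scale, hg₂, ← Matrix.map_mul, ← hw]
      simp only [Matrix.fromCols_map, matrix_map_sub, Matrix.map_mul, hV, hg₁, hg₂,
        matrix_map_scale, matrix_map_one])
  refine ⟨e * d, T.mul_mem he hd, α.map (scale e), β.map (scale e), ?_⟩
  simp only [matrix_map_scale_scale, Matrix.fromCols_map, matrix_map_sub, Matrix.map_mul,
    matrix_map_one] at h_dvd
  obtain ⟨h_map, h_inv⟩ := h_dvd.of_fromCols
  exact ⟨by simpa using h_map.add (.refl _), h_inv⟩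

lemma exists_cokerSurj_scale
    (hg₁ : G₁.map (mapRingHom (algebraMap B B')) = g₁)
    (hg₂ : G₂.map (mapRingHom (algebraMap B B')) = g₂)
    (hG : G₁.map constantCoeff = G₂.map constantCoeff)
    (hreg : IsSMulRegular (Coker g₂) (X : B'[X]))
    (hag : LeftDvd g₂ (a * g₁)) (hab : LeftDvd g₂ (a * b - 1))
    (ha : LeftDvd (g₂.map constantCoeff) (a.map constantCoeff - 1))
    (hb : LeftDvd (g₂.map constantCoeff) (b.map constantCoeff - 1)) :
    ∃ c ∈ T, CokerSurj (G₁.map (scale c)) (G₂.map (scale c)) := by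
  classical
  have hg : g₁.map constantCoeff = g₂.map constantCoeff := by
    rw [← hg₁, ← hg₂, matrix_map_constantCoeff_map, matrix_map_constantCoeff_map, hG]
  obtain ⟨U, hU⟩ := ha
  obtain ⟨V, hV⟩ := hb
  have constantCoeff_map_C {k l : Type _} (Z : Matrix k l B') :
      (Z.map C).map constantCoeff = Z := by
    ext
    simp
  refine exists_cokerSurj_scale_of_constantCoeff_eq_one T hg₁ hg₂ hG hreg
    (a := a - g₂ * U.map C) (b := b - g₁ * V.map C) ?_ ?_ ?_ ?_
  · rw [Matrix.sub_mul, Matrix.mul_assoc]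
    exact hag.sub ⟨_, rfl⟩
  · have expand : (a - g₂ * U.map C) * (b - g₁ * V.map C) - 1 =
        (a * b - 1) - (a * g₁) * V.map C - g₂ * (U.map C * (b - g₁ * V.map C)) := by
      simp only [Matrix.sub_mul, Matrix.mul_sub, Matrix.mul_assoc]
      abel
    rw [expand]
    exact (hab.sub (hag.mul_right _)).sub ⟨_, rfl⟩
  · rw [matrix_map_sub, Matrix.map_mul, constantCoeff_map_C, ← hU, sub_sub_cancel]
  · rw [matrix_map_sub, Matrix.map_mul, constantCoeff_map_C, hg, ← hV, sub_sub_cancel]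

end Localization

/-- A contraction of the `A`-algebra `R` onto `A` along a polynomial path of `A`-algebra
endomorphisms: at time `1` the path is the identity, at time `0` it is a retraction onto `A`. A
grading with `R₀ = A` gives such a path `r ↦ r X ^ i` (`r` of degree `i`). -/
structure PolynomialContraction (A R : Type*) [CommRing A] [CommRing R] [Algebra A R] where
  path : R →ₐ[A] R[X]
  retraction : R →ₐ[A] A
  eval_one_path (r : R) : (path r).eval 1 = r
  coeff_zero_path (r : R) : (path r).coeff 0 = algebraMap A R (retraction r)

section Grading

variable {A R : Type*} [CommRing A] [CommRing R] [Algebra A R]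
variable (𝒜 : ℕ → Submodule A R) [GradedAlgebra 𝒜]

/-- The homomorphism `R → R[X]` multiplying the elements of degree `i` by `X ^ i`; geometrically,
the action of the multiplicative monoid defined by the grading. -/
noncomputable def gradingPath : R →ₐ[A] R[X] :=
  (DirectSum.toAlgebra A (fun i ↦ 𝒜 i)
    (fun i ↦ (monomial i).restrictScalars A ∘ₗ (𝒜 i).subtype)
    monomial_zero_one fun x y ↦ (monomial_mul_monomial _ _ (x : R) (y : R)).symm).comp
    (DirectSum.decomposeAlgEquiv 𝒜)

lemma gradingPath_coe {i : ℕ} (x : 𝒜 i) : gradingPath 𝒜 x = monomial i (x : R) := by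
  rw [gradingPath, AlgHom.comp_apply]
  exact (congrArg _ (DirectSum.decompose_coe 𝒜 x)).trans <| DirectSum.toSemiring_of
    (fun i ↦ ((monomial i).restrictScalars A ∘ₗ (𝒜 i).subtype).toAddMonoidHom)
    monomial_zero_one (fun x y ↦ (monomial_mul_monomial _ _ (x : R) (y : R)).symm) i x

lemma eval_one_gradingPath (r : R) : (gradingPath 𝒜 r).eval 1 = r := by
  induction r using DirectSum.Decomposition.inductionOn 𝒜 with
  | zero => simp
  | homogeneous x => simp [gradingPath_coe]
  | add x y hx hy => rw [map_add, eval_add, hx, hy]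

lemma coeff_zero_gradingPath_mem (r : R) : (gradingPath 𝒜 r).coeff 0 ∈ 𝒜 0 := by
  induction r using DirectSum.Decomposition.inductionOn 𝒜 with
  | zero => simp
  | @homogeneous i x =>
    rcases i with _ | i <;> simp [gradingPath_coe]
  | add x y hx hy =>
    rw [map_add, coeff_add]
    exact add_mem hx hy

end Grading

namespace PolynomialContraction

/-- The contraction `r ↦ r X ^ i` (`r` of degree `i`) of a graded ring with `R₀ = A`. -/
noncomputable def ofGrading {A R : Type*} [CommRing A] [CommRing R] [Algebra A R]
    (𝒜 : ℕ → Submodule A R) [GradedAlgebra 𝒜]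
    (h0 : 𝒜 0 = LinearMap.range (Algebra.linearMap A R))
    (hinj : Function.Injective (algebraMap A R)) : PolynomialContraction A R :=
  let proj : R →ₐ[A] R := ((aeval (0 : R)).restrictScalars A).comp (gradingPath 𝒜)
  have proj_eq (r : R) : proj r = (gradingPath 𝒜 r).coeff 0 := (coeff_zero_eq_aeval_zero _).symm
  let e : A ≃ₐ[A] (Algebra.ofId A R).range := AlgEquiv.ofInjective (Algebra.ofId A R) hinj
  let projA : R →ₐ[A] (Algebra.ofId A R).range :=
    proj.codRestrict _ fun r ↦ by
      rw [proj_eq]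
      exact h0.le (coeff_zero_gradingPath_mem 𝒜 r)
  { path := gradingPath 𝒜
    retraction := e.symm.toAlgHom.comp projA
    eval_one_path := eval_one_gradingPath 𝒜
    coeff_zero_path := fun r ↦ by
      rw [← proj_eq]
      exact (congrArg Subtype.val (e.apply_symm_apply (projA r))).symm }

variable {A A' R R' B B' : Type*} [CommRing A] [CommRing A'] [CommRing R] [CommRing R']
variable [CommRing B] [CommRing B'] [Algebra A R] [Algebra R B] [Algebra R B']
variable (h : PolynomialContraction A R)

/-- The homomorphism `R → B` at time `x ∈ B` of the path of a contraction of `R`. -/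
noncomputable def specialize (x : B) : R →+* B :=
  (aeval x : R[X] →ₐ[R] B).toRingHom.comp h.path

lemma specialize_apply (x : B) (r : R) :
    h.specialize x r = aeval x (h.path r) := rfl

lemma specialize_one : h.specialize (1 : B) = algebraMap R B := by
  ext r
  rw [specialize_apply, ← map_one (algebraMap R B), aeval_algebraMap_apply_eq_algebraMap_eval,
    h.eval_one_path]

lemma specialize_zero :
    h.specialize (0 : B) = (algebraMap R B).comp ((algebraMap A R).comp h.retraction) := by
  ext r
  rw [specialize_apply, ← coeff_zero_eq_aeval_zero', h.coeff_zero_path]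
  rfl

lemma comp_specialize {f : B →+* B'}
    (hf : f.comp (algebraMap R B) = algebraMap R B') (x : B) :
    f.comp (h.specialize x) = h.specialize (f x) := by
  ext r
  simp only [RingHom.comp_apply, specialize_apply, aeval_def, hom_eval₂, hf]

lemma specialize_comp_specialize_zero (x : B) :
    (h.specialize x).comp (h.specialize (0 : R)) =
      (algebraMap R B).comp (h.specialize (0 : R)) := by
  ext r
  simp [specialize_zero, specialize_apply]

end PolynomialContraction

section Pushout

variable {A A' R C : Type*} (R' : Type*) [CommRing A] [CommRing A'] [CommRing R] [CommRing R']
variable [CommRing C] [Algebra A A'] [Algebra A R] [Algebra A R'] [Algebra R R'] [Algebra A' R']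
variable [IsScalarTower A R R'] [IsScalarTower A A' R'] [Algebra.IsPushout A R A' R']
variable [Algebra A C] [Algebra A' C] [IsScalarTower A A' C]
variable (f : R →ₐ[A] C)

/-- The `A'`-algebra homomorphism from the base change `R' = R ⊗[A] A'` induced by an `A`-algebra
homomorphism from `R`. -/
noncomputable def pushoutLift : R' →ₐ[A'] C :=
  { Algebra.pushoutDesc R' f (IsScalarTower.toAlgHom A A' C) fun _ _ ↦ mul_comm .. with
    commutes' := Algebra.pushoutDesc_right R' f (IsScalarTower.toAlgHom A A' C) _ }

lemma pushoutLift_algebraMap (r : R) :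
    (pushoutLift R' f : R' →ₐ[A'] C) (algebraMap R R' r) = f r :=
  Algebra.pushoutDesc_left R' f (IsScalarTower.toAlgHom A A' C) _ r

variable {R'} in
lemma pushout_algHom_ext {φ ψ : R' →ₐ[A'] C}
    (h : (φ.restrictScalars A).comp (IsScalarTower.toAlgHom A R R') =
      (ψ.restrictScalars A).comp (IsScalarTower.toAlgHom A R R')) : φ = ψ := by
  have hA' : (φ.restrictScalars A).comp (IsScalarTower.toAlgHom A A' R') =
      (ψ.restrictScalars A).comp (IsScalarTower.toAlgHom A A' R') :=
    AlgHom.ext fun a ↦ (φ.commutes a).trans (ψ.commutes a).symm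
  exact AlgHom.restrictScalars_injective A (Algebra.IsPushout.algHom_ext R' hA' h)

end Pushout

namespace PolynomialContraction

variable {A A' R R' : Type*} [CommRing A] [CommRing A'] [CommRing R] [CommRing R']
variable [Algebra A A'] [Algebra A R] [Algebra A R'] [Algebra R R'] [Algebra A' R']
variable [IsScalarTower A R R'] [IsScalarTower A A' R'] [Algebra.IsPushout A R A' R']
variable (h : PolynomialContraction A R)

/-- The contraction of the base change `R' = R ⊗[A] A'` induced by a contraction of `R`. -/
noncomputable def baseChange : PolynomialContraction A' R' :=
  let path : R' →ₐ[A'] R'[X] :=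
    pushoutLift R' ((mapAlgHom (IsScalarTower.toAlgHom A R R')).comp h.path)
  let retraction : R' →ₐ[A'] A' := pushoutLift R' ((Algebra.ofId A A').comp h.retraction)
  have eval_one_path : ((aeval (1 : R')).restrictScalars A').comp path = AlgHom.id A' R' :=
    pushout_algHom_ext (A := A) <| AlgHom.ext fun r : R ↦ by
      simpa [path, pushoutLift_algebraMap, specialize_apply]
        using RingHom.congr_fun (h.specialize_one (B := R')) r
  have eval_zero_path : ((aeval (0 : R')).restrictScalars A').comp path =
      (Algebra.ofId A' R').comp retraction :=
    pushout_algHom_ext (A := A) <| AlgHom.ext fun r : R ↦ by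
      simpa [path, retraction, pushoutLift_algebraMap, specialize_apply,
        ← IsScalarTower.algebraMap_apply] using RingHom.congr_fun (h.specialize_zero (B := R')) r
  { path := path
    retraction := retraction
    eval_one_path := fun r' ↦ AlgHom.congr_fun eval_one_path r'
    coeff_zero_path := fun r' ↦
      (coeff_zero_eq_aeval_zero _).trans (AlgHom.congr_fun eval_zero_path r') }

lemma baseChange_specialize_comp_algebraMap {B : Type*} [CommRing B] [Algebra R B] [Algebra R' B]
    [IsScalarTower R R' B] (x : B) :
    ((h.baseChange : PolynomialContraction A' R').specialize x).comp (algebraMap R R') =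
      h.specialize x := by
  ext r
  simp [specialize_apply, baseChange, pushoutLift_algebraMap]

section Patching

variable {A R B : Type*} [CommRing A] [CommRing R] [CommRing B] [Algebra A R] [Algebra R B]
variable (h : PolynomialContraction A R)
variable {n m : Type*}

lemma matrix_map_specialize {B' : Type*} [CommRing B'] [Algebra R B'] {f : B →+* B'}
    (hf : f.comp (algebraMap R B) = algebraMap R B') (x : B) (G : Matrix n m R) :
    (G.map (h.specialize x)).map f = G.map (h.specialize (f x)) := by
  rw [← h.comp_specialize hf, Matrix.map_map, RingHom.coe_comp]

lemma matrix_map_specialize_zero_specialize (x : B) (G : Matrix n m R) :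
    (G.map (h.specialize (0 : R))).map (h.specialize x) =
      (G.map (h.specialize (0 : R))).map (algebraMap R B) := by
  rw [Matrix.map_map, Matrix.map_map, ← RingHom.coe_comp, ← RingHom.coe_comp,
    h.specialize_comp_specialize_zero]

variable [Fintype n] [DecidableEq n] [Fintype m] {G : Matrix n m R}

lemma cokerSurj_specialize {c : R}
    (hc : CokerSurj (G.map (h.specialize (C X : R[X][X])))
      (G.map (h.specialize (C X + C (C c) * X : R[X][X])))) (s t : B) :
    CokerSurj (G.map (h.specialize s)) (G.map (h.specialize (s + algebraMap R B c * t))) := by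
  have := hc.map (aevalAeval s t).toRingHom
  rw [h.matrix_map_specialize (aevalAeval s t).comp_algebraMap,
    h.matrix_map_specialize (aevalAeval s t).comp_algebraMap] at this
  simpa using this

/-- Quillen's patching ideal of the module presented by `G`: the `c` such that the specialization
at time `s` maps onto the one at time `s + c * t`. The times `s` and `t` are taken to be the
variables of `R[X][X]`, the inner one being `s`; by `cokerSurj_specialize` they may then be
specialized to any two elements of an `R`-algebra. -/
noncomputable def patchingIdeal (G : Matrix n m R) : Ideal A where
  carrier := {c | CokerSurj (G.map (h.specialize (C X : R[X][X])))
    (G.map (h.specialize (C X + C (C (algebraMap A R c)) * X : R[X][X])))}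
  zero_mem' := by
    classical
    simpa using CokerSurj.refl (G.map (h.specialize (C X : R[X][X])))
  add_mem' {c d} hc hd := by
    have := hc.trans (h.cokerSurj_specialize hd (C X + C (C (algebraMap A R c)) * X) X)
    simpa [add_mul, add_assoc] using this
  smul_mem' a c hc := by
    have := h.cokerSurj_specialize hc (C X) (C (C (algebraMap A R a)) * X : R[X][X])
    simpa [mul_comm a c, mul_assoc] using this

lemma mem_patchingIdeal {c : A} :
    c ∈ h.patchingIdeal G ↔ CokerSurj (G.map (h.specialize (C X : R[X][X])))
      (G.map (h.specialize (C X + C (C (algebraMap A R c)) * X : R[X][X]))) := Iff.rfl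

lemma nonempty_linearEquiv_of_mem_patchingIdeal {c : A} (hc : c ∈ h.patchingIdeal G)
    (hu : IsUnit (algebraMap R B (algebraMap A R c))) :
    Nonempty (Coker (G.map (algebraMap R B)) ≃ₗ[B] Coker (G.map (h.specialize (0 : B)))) := by
  obtain ⟨w, hw⟩ := hu.exists_right_inv
  have zero_one := h.cokerSurj_specialize hc (0 : B) w
  have one_zero := h.cokerSurj_specialize hc (1 : B) (-w)
  rw [hw, zero_add, h.specialize_one] at zero_one
  rw [mul_neg, hw, add_neg_cancel, h.specialize_one] at one_zero
  exact one_zero.nonempty_linearEquiv zero_one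

/-- Both fibres are compared with the constant fibre at time `0`. -/
lemma exists_cokerInverse_specialize
    (f : Coker G ≃ₗ[R] Coker (G.map (h.specialize (0 : R)))) :
    ∃ a b : Matrix n n R[X][X],
      CokerInverse (G.map (h.specialize (C X : R[X][X])))
        (G.map (h.specialize (C X + X : R[X][X]))) a b ∧
      IsSMulRegular (Coker (G.map (h.specialize (C X + X : R[X][X])))) (X : R[X][X]) ∧
      LeftDvd ((G.map (h.specialize (C X + X : R[X][X]))).map constantCoeff)
        (a.map constantCoeff - 1) ∧
      LeftDvd ((G.map (h.specialize (C X + X : R[X][X]))).map constantCoeff)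
        (b.map constantCoeff - 1) := by
  obtain ⟨a, b, hab⟩ := exists_cokerInverse f
  have h_left := hab.map (h.specialize (C X : R[X][X]))
  have h_right := hab.map (h.specialize (C X + X : R[X][X]))
  rw [h.matrix_map_specialize_zero_specialize] at h_left h_right
  have h_zero : LeftDvd (G.map (h.specialize (X : R[X])))
      (b.map (h.specialize (X : R[X])) * a.map (h.specialize (X : R[X])) - 1) :=
    (hab.map (h.specialize (X : R[X]))).left_inv
  have h_reg : IsSMulRegular (Coker ((G.map (h.specialize (0 : R))).map (algebraMap R R[X][X])))
      (X : R[X][X]) := by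
    have : (G.map (h.specialize (0 : R))).map (algebraMap R R[X][X]) =
        ((G.map (h.specialize (0 : R))).map C).map C := by
      rw [Matrix.map_map]
      rfl
    rw [this]
    exact isSMulRegular_X_coker_map_C _
  refine ⟨_, _, h_left.trans h_right.symm, h_right.isSMulRegular h_reg, ?_, ?_⟩
  all_goals
    simpa only [Matrix.map_mul, h.matrix_map_specialize (constantCoeff_comp_algebraMap R _),
      map_add, constantCoeff_apply, coeff_C_zero, coeff_X_zero, add_zero] using h_zero

end Patching

section Localization

variable {A A' R R' : Type*} [CommRing A] [CommRing A'] [CommRing R] [CommRing R']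
variable [Algebra A A'] [Algebra A R] [Algebra A R'] [Algebra R R'] [Algebra A' R']
variable [IsScalarTower A R R'] [IsScalarTower A A' R']
variable {n m : Type*}

lemma matrix_map_baseChange_specialize [Algebra.IsPushout A R A' R'] {B : Type*} [CommRing B]
    [Algebra R B] [Algebra R' B] [IsScalarTower R R' B] (h : PolynomialContraction A R) (x : B)
    (G : Matrix n m R) :
    (G.map (algebraMap R R')).map ((h.baseChange : PolynomialContraction A' R').specialize x) =
      G.map (h.specialize x) := by
  rw [← h.baseChange_specialize_comp_algebraMap (A' := A') (R' := R'), Matrix.map_map,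
    RingHom.coe_comp]

variable [Fintype n] [DecidableEq n] [Fintype m] {G : Matrix n m R}

lemma exists_mem_patchingIdeal (h : PolynomialContraction A R) (T : Submonoid A)
    [Algebra.IsPushout A R A' R'] [IsLocalization (Algebra.algebraMapSubmonoid R T) R']
    (f : Coker (G.map (algebraMap R R')) ≃ₗ[R'] Coker (G.map (h.specialize (0 : R')))) :
    ∃ c ∈ T, c ∈ h.patchingIdeal G := by
  let h' : PolynomialContraction A' R' := h.baseChange
  let : Algebra R[X] R'[X] := Polynomial.algebra R R'
  have : IsLocalization ((Algebra.algebraMapSubmonoid R T).map C) R'[X] := isLocalization _ _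
  have h_lift (x : R[X][X]) :
      (G.map (h.specialize x)).map (mapRingHom (algebraMap R[X] R'[X])) =
        (G.map (algebraMap R R')).map
          (h'.specialize (mapRingHom (algebraMap R[X] R'[X]) x)) := by
    rw [h.matrix_map_baseChange_specialize, h.matrix_map_specialize]
    ext
    simp
  rw [← h.matrix_map_baseChange_specialize (A' := A') (R' := R')] at f
  obtain ⟨a, b, hab, h_reg, ha, hb⟩ := h'.exists_cokerInverse_specialize f
  obtain ⟨_, ⟨_, ⟨c, hc, rfl⟩, rfl⟩, h_surj⟩ := exists_cokerSurj_scale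
    ((Algebra.algebraMapSubmonoid R T).map C)
    (G₁ := G.map (h.specialize (C X : R[X][X]))) (G₂ := G.map (h.specialize (C X + X : R[X][X])))
    (by rw [h_lift]; simp) (by rw [h_lift]; simp)
    (by simp [h.matrix_map_specialize (constantCoeff_comp_algebraMap R _)])
    h_reg hab.map_left hab.right_inv ha hb
  refine ⟨c, hc, h.mem_patchingIdeal.mpr ?_⟩
  rw [h.matrix_map_specialize (scale_comp_algebraMap R _),
    h.matrix_map_specialize (scale_comp_algebraMap R _)] at h_surj
  simpa using h_surj

end Localization

end PolynomialContraction

section ExtendedModules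

variable {A R : Type u} [CommRing A] [CommRing R] [Algebra A R]
variable {n : Type} {m : Type*} [Fintype m] {G : Matrix n m R}
variable {M : Type u} [AddCommGroup M] [Module R M]

lemma extendedFromAlg_iff [Finite n] (h : PolynomialContraction A R) (hM : M ≃ₗ[R] Coker G) :
    ExtendedFromAlg A R M ↔ Nonempty (Coker G ≃ₗ[R] Coker (G.map (h.specialize (0 : R)))) := by
  have h_map : G.map (h.specialize (0 : R)) = (G.map h.retraction).map (algebraMap A R) := by
    rw [h.specialize_zero, Matrix.map_map]
    rfl
  obtain ⟨e⟩ := nonempty_linearEquiv_coker_map (S' := R) (G.map h.retraction)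
  rw [← h_map] at e
  refine ⟨fun ⟨N, _, _, ⟨f⟩⟩ ↦ ?_, fun ⟨f⟩ ↦ ⟨Coker (G.map h.retraction), inferInstance,
    inferInstance, ⟨hM ≪≫ₗ f ≪≫ₗ e.symm⟩⟩⟩
  let : Algebra R A := h.retraction.toRingHom.toAlgebra
  have : IsScalarTower A R A := .of_algebraMap_eq fun a ↦ (h.retraction.commutes a).symm
  obtain ⟨e'⟩ := nonempty_linearEquiv_coker_map (S' := A) G
  let eN : N ≃ₗ[A] Coker (G.map h.retraction) :=
    (TensorProduct.lid A N).symm ≪≫ₗ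
      (TensorProduct.AlgebraTensorModule.cancelBaseChange A R A A N).symm ≪≫ₗ
      (f.symm ≪≫ₗ hM).baseChange R A _ _ ≪≫ₗ e'
  exact ⟨hM.symm ≪≫ₗ f ≪≫ₗ eN.baseChange A R _ _ ≪≫ₗ e⟩

section BaseChange

variable {A' R' M' : Type u} [CommRing A'] [CommRing R'] [AddCommGroup M']
variable [Algebra A A'] [Algebra R R'] [Algebra A R'] [Algebra A' R']
variable [IsScalarTower A R R'] [IsScalarTower A A' R']
variable [Module R M'] [Module R' M'] [IsScalarTower R R' M'] {g : M →ₗ[R] M'}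

lemma extendedFromAlg_iff_of_isBaseChange [Finite n] [Algebra.IsPushout A R A' R']
    (h : PolynomialContraction A R) (hM : M ≃ₗ[R] Coker G) (hg : IsBaseChange R' g) :
    ExtendedFromAlg A' R' M' ↔
      Nonempty (Coker (G.map (algebraMap R R')) ≃ₗ[R'] Coker (G.map (h.specialize (0 : R')))) := by
  obtain ⟨e⟩ := nonempty_linearEquiv_coker_map (S' := R') G
  rw [extendedFromAlg_iff (A := A') h.baseChange
      (hg.equiv.symm ≪≫ₗ hM.baseChange R R' _ _ ≪≫ₗ e),
    h.matrix_map_baseChange_specialize]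

variable [Fintype n] [DecidableEq n]

lemma extendedFromAlg_of_mem_patchingIdeal [Algebra.IsPushout A R A' R']
    (h : PolynomialContraction A R) (hM : M ≃ₗ[R] Coker G) (hg : IsBaseChange R' g) {c : A}
    (hc : c ∈ h.patchingIdeal G) (hu : IsUnit (algebraMap R R' (algebraMap A R c))) :
    ExtendedFromAlg A' R' M' :=
  (extendedFromAlg_iff_of_isBaseChange h hM hg).mpr
    (h.nonempty_linearEquiv_of_mem_patchingIdeal hc hu)

lemma exists_mem_patchingIdeal_of_extendedFromAlg (h : PolynomialContraction A R)
    (hM : M ≃ₗ[R] Coker G) (T : Submonoid A) [IsLocalization T A']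
    [IsLocalization (Algebra.algebraMapSubmonoid R T) R']
    [IsLocalizedModule (Algebra.algebraMapSubmonoid R T) g] (hext : ExtendedFromAlg A' R' M') :
    ∃ c ∈ T, c ∈ h.patchingIdeal G := by
  have : Algebra.IsPushout A R A' R' := Algebra.isPushout_of_isLocalization T A' R R'
  obtain ⟨f⟩ := (extendedFromAlg_iff_of_isBaseChange h hM
    (IsLocalizedModule.isBaseChange (Algebra.algebraMapSubmonoid R T) R' g)).mp hext
  exact h.exists_mem_patchingIdeal (A' := A') T f

end BaseChange

lemma isLocallyExtendedAway_iff [Fintype n] [DecidableEq n] (h : PolynomialContraction A R)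
    (hM : M ≃ₗ[R] Coker G) (u : A) :
    IsLocallyExtendedAway A R M u ↔ u ∈ (h.patchingIdeal G).radical := by
  constructor
  · intro hu
    let T := Algebra.algebraMapSubmonoid R (Submonoid.powers u)
    have hT : T = Submonoid.powers (algebraMap A R u) := Algebra.algebraMapSubmonoid_powers u
    have : IsLocalization.Away (algebraMap A R u) (Localization T) := by
      rw [IsLocalization.Away, ← hT]
      infer_instance
    have hext := hu (Localization (Submonoid.powers u)) (Localization T) (LocalizedModule T M)
      (LocalizedModule.mkLinearMap T M) (by rw [← hT]; infer_instance)
    obtain ⟨_, ⟨k, rfl⟩, hk⟩ := exists_mem_patchingIdeal_of_extendedFromAlg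
      (g := LocalizedModule.mkLinearMap T M) h hM (Submonoid.powers u) hext
    exact ⟨k, hk⟩
  · rintro ⟨k, hk⟩ Aᵤ Rᵤ Mᵤ _ _ _ _ _ _ _ _ _ _ _ _ _ _ g _
    have : IsLocalization (Algebra.algebraMapSubmonoid R (Submonoid.powers u)) Rᵤ := by
      rwa [Algebra.algebraMapSubmonoid_powers]
    have : Algebra.IsPushout A R Aᵤ Rᵤ :=
      Algebra.isPushout_of_isLocalization (Submonoid.powers u) Aᵤ R Rᵤ
    refine extendedFromAlg_of_mem_patchingIdeal h hM
      (IsLocalizedModule.isBaseChange (Submonoid.powers (algebraMap A R u)) Rᵤ g) hk ?_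
    rw [map_pow, map_pow]
    exact (IsLocalization.Away.algebraMap_isUnit (algebraMap A R u)).pow k

lemma exists_mem_patchingIdeal_notMem [Fintype n] [DecidableEq n]
    (h : PolynomialContraction A R) (hM : M ≃ₗ[R] Coker G) {𝔭 : PrimeSpectrum A}
    (h𝔭 : IsLocallyExtendedAtPrime A R M 𝔭) :
    ∃ c ∈ h.patchingIdeal G, c ∉ 𝔭.asIdeal := by
  let T := Algebra.algebraMapSubmonoid R 𝔭.asIdeal.primeCompl
  obtain ⟨c, hc𝔭, hc⟩ := exists_mem_patchingIdeal_of_extendedFromAlg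
    (g := LocalizedModule.mkLinearMap T M) h hM 𝔭.asIdeal.primeCompl
    (h𝔭 (Localization 𝔭.asIdeal.primeCompl) (Localization T) (LocalizedModule T M)
      (LocalizedModule.mkLinearMap T M) inferInstance)
  exact ⟨c, hc, hc𝔭⟩

lemma extendedFromAlg_of_isLocallyExtendedAtPrime [Finite n] (h : PolynomialContraction A R)
    (hM : M ≃ₗ[R] Coker G) (h_loc : ∀ 𝔭 : PrimeSpectrum A, IsLocallyExtendedAtPrime A R M 𝔭) :
    ExtendedFromAlg A R M := by
  classical
  have := Fintype.ofFinite n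
  have h_top : h.patchingIdeal G = ⊤ := by
    by_contra h_ne
    obtain ⟨P, hP, hle⟩ := Ideal.exists_le_maximal _ h_ne
    obtain ⟨c, hc, hcP⟩ := exists_mem_patchingIdeal_notMem h hM (h_loc ⟨P, hP.isPrime⟩)
    exact hcP (hle hc)
  exact extendedFromAlg_of_mem_patchingIdeal h hM (IsBaseChange.ofEquiv (.refl R M))
    (c := 1) (h_top ▸ Submodule.mem_top) (by simp)

end ExtendedModules

end QuillenPatching

theorem quillen_patching_graded_general {A R : Type u} [CommRing A] [CommRing R] [Algebra A R]
    (h : QuillenPatching.PolynomialContraction A R) (M : Type u) [AddCommGroup M] [Module R M]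
    [Module.FinitePresentation R M] :
    (∃ Idl : Ideal A, ∀ u : A, u ∈ Idl ↔ IsLocallyExtendedAway A R M u) ∧
    ((∀ 𝔭 : PrimeSpectrum A, IsLocallyExtendedAtPrime A R M 𝔭) → ExtendedFromAlg A R M) := by
  obtain ⟨n, m, G, ⟨hM⟩⟩ := QuillenPatching.exists_linearEquiv_coker R M
  exact ⟨⟨(h.patchingIdeal G).radical,
      fun u ↦ (QuillenPatching.isLocallyExtendedAway_iff h hM u).symm⟩,
    QuillenPatching.extendedFromAlg_of_isLocallyExtendedAtPrime h hM⟩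

theorem quillen_patching_graded
    (A : Type u) [CommRing A] [IsNoetherianRing A]
    (R : Type u) [CommRing R] [IsNoetherianRing R] [Algebra A R]
    (𝒜 : ℕ → Submodule A R) [GradedAlgebra 𝒜]
    (h0 : 𝒜 0 = LinearMap.range (Algebra.linearMap A R))
    (hinj : Function.Injective (algebraMap A R))
    (M : Type u) [AddCommGroup M] [Module R M] [Module.FinitePresentation R M] :
    (∃ Idl : Ideal A, ∀ u : A, u ∈ Idl ↔ IsLocallyExtendedAway A R M u) ∧
    ((∀ 𝔭 : PrimeSpectrum A, IsLocallyExtendedAtPrime A R M 𝔭) →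
      ExtendedFromAlg A R M) :=
  quillen_patching_graded_general
    (QuillenPatching.PolynomialContraction.ofGrading 𝒜 h0 hinj) M
end
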